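/- arXiv:1608.04018 — 8 statements merged into one kernel-verified Lean document; each statement's English description precedes it below -/
import Mathlib

section
/- Let ⪯ be a pre-order on a set Ω and let α_1,…,α_d, β_1,…,β_d ∈ Ω. If α_i ⪯ β_i for each i ∈ {1,…,d}, and there exists a permutation φ of {1,…,d} such that β_{φ(i)} ⪯ α_i for each i, then β_i ⪯ α_i for each i. -/
/-!
Chaining `β (φ i) ⪯ α i ⪯ β i` shows that `β` decreases along forward orbits of `φ`. A permutation
of a finite set has finite order, so `i` itself lies on the forward orbit of `φ i`; hence
`β i ⪯ β (φ i) ⪯ α i`.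
-/

/-- **Lemma 2.2 (Paget–Wildon).** Let `⪯` (here `r`) be a pre-order on a set `Ω` and let
`α₁, …, α_d, β₁, …, β_d ∈ Ω`.  If `αᵢ ⪯ βᵢ` for each `i`, and there exists a permutation `φ`
of `{1, …, d}` such that `β_{φ(i)} ⪯ αᵢ` for each `i`, then `βᵢ ⪯ αᵢ` for each `i`. -/
theorem preorder_alpha_beta {Ω : Type*} (r : Ω → Ω → Prop)
    (hrefl : ∀ a, r a a) (htrans : ∀ a b c, r a b → r b c → r a c)
    (d : ℕ) (α β : Fin d → Ω)
    (h1 : ∀ i, r (α i) (β i))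
    (φ : Equiv.Perm (Fin d)) (h2 : ∀ i, r (β (φ i)) (α i)) :
    ∀ i, r (β i) (α i) := by
  have iter : ∀ (n : ℕ) (i : Fin d), r (β ((φ ^ n) i)) (β i) := by
    intro n
    induction n with
    | zero => exact fun i => hrefl _
    | succ n ih =>
      intro i
      rw [pow_succ, Equiv.Perm.mul_apply]
      exact htrans _ _ _ (ih (φ i)) (htrans _ _ _ (h2 i) (h1 i))
  intro i
  -- The exponent `orderOf φ - 1` leads from `φ i` around its cycle back to `i`.
  have h := iter (orderOf φ - 1) (φ i)
  rw [← Equiv.Perm.mul_apply, pow_sub_one_mul (orderOf_pos φ).ne', pow_orderOf_eq_one,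
    Equiv.Perm.one_apply] at h
  exact htrans _ _ _ h (h2 i)
end

section
/- Let ⪯ be a pre-order on a set Ω, let γ be a partition, and let u be a row-standard γ-tableau with entries in Ω. If σ ∈ RPP(γ) and σ is not the identity, then (u·σ) ⪯_col u and it is not the case that u ⪯_col (u·σ); that is, u·σ ≺_col u. -/
/-!
Let `J` be the rightmost column containing a box moved by `σ⁻¹`. To the right of `J` the tableaux
`u·σ` and `u` agree box by box. A box of column `J` is sent by `σ⁻¹` to a box of the same row which
cannot lie to the right of `J` (those boxes are fixed), so by row-standardness each entry of `u·σ`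
in column `J` is `⪯` the entry of `u` in the same box, strictly so at a moved box `b₀`.

To turn this into statements about multisets, count the entries `x` of column `J` with `u b₀ ⪯ x`:
this up-set count is monotone for `⪯` between listings (`countP_le_of_forall₂`), and it is
strictly smaller for `u·σ` than for `u` (`countP_map_lt`), as `b₀` is lost. Hence the two multisets
differ in column `J`, and `u ⪯_col u·σ` is impossible.
-/

/-- The boxes of the Young diagram of `μ : ℕ → ℕ`, zero-indexed:
row `i` consists of the boxes `(i, j)` for `j < μ i`. -/
abbrev Box (μ : ℕ → ℕ) : Type := {p : ℕ × ℕ // p.2 < μ p.1}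

/-- The group of row place permutations: permutations of the boxes mapping every box to a box
in the same row. -/
def RPP (μ : ℕ → ℕ) (σ : Equiv.Perm (Box μ)) : Prop :=
  ∀ b, ((σ b : ℕ × ℕ)).1 = ((b : ℕ × ℕ)).1

/-- The place permutation action: `(t·σ)(p) = t(σ⁻¹ p)`. -/
def placePerm (μ : ℕ → ℕ) {Ω : Type*} (t : Box μ → Ω) (σ : Equiv.Perm (Box μ)) : Box μ → Ω :=
  fun b => t (σ⁻¹ b)

/-- The multiset of entries of the tableau `t` in column `j` (rows are bounded by `k`). -/
def colM (μ : ℕ → ℕ) (k : ℕ) {Ω : Type*} (t : Box μ → Ω) (j : ℕ) : Multiset Ω :=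
  (((Finset.range k).filter fun i => j < μ i).attach.val).map
    fun i => t ⟨(i.1, j), by exact (Finset.mem_filter.mp i.2).2⟩

/-- The relation `u ⪯_col v` induced by a pre-order `r` on the entries: either the multisets of
entries of `u` and `v` agree in every column, or, letting `j` be the largest (rightmost) column
where they differ, the entries of `u` and `v` in column `j` may be listed as `α₁, …, α_d` and
`β₁, …, β_d` with `αₛ ⪯ βₛ` for all `s`. -/
def ColLE (μ : ℕ → ℕ) (k : ℕ) {Ω : Type*} (r : Ω → Ω → Prop) (u v : Box μ → Ω) : Prop :=
  (∀ j, colM μ k u j = colM μ k v j) ∨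
  ∃ j, colM μ k u j ≠ colM μ k v j ∧ (∀ j', j < j' → colM μ k u j' = colM μ k v j') ∧
    ∃ l l' : List Ω, (l : Multiset Ω) = colM μ k u j ∧ (l' : Multiset Ω) = colM μ k v j ∧
      List.Forall₂ r l l'

/-- A tableau is row-standard (for the pre-order `r`) if the entries of each row, read from
left to right, form a chain in the associated strict relation `≺`. -/
def RowStandard (μ : ℕ → ℕ) {Ω : Type*} (r : Ω → Ω → Prop) (u : Box μ → Ω) : Prop :=
  ∀ i j j' (h : j < μ i) (h' : j' < μ i), j < j' →
    r (u ⟨(i, j), h⟩) (u ⟨(i, j'), h'⟩) ∧ ¬ r (u ⟨(i, j'), h'⟩) (u ⟨(i, j), h⟩)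

/-- The number of entries in an upwards closed set `P` is monotone along listings related
entrywise. -/
lemma countP_le_of_forall₂ {Ω : Type*} {r : Ω → Ω → Prop} (P : Ω → Prop) [DecidablePred P]
    (hP : ∀ x y, r x y → P x → P y) {l l' : List Ω} (h : List.Forall₂ r l l') :
    Multiset.countP P (l : Multiset Ω) ≤ Multiset.countP P (l' : Multiset Ω) := by
  induction h with
  | nil => exact le_rfl
  | @cons a b l l' hab _ ih =>
    rw [← Multiset.cons_coe, ← Multiset.cons_coe, Multiset.countP_cons, Multiset.countP_cons]
    have := hP a b hab
    split_ifs <;> first | omega | tauto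

lemma countP_map_lt {ι Ω : Type*} (s : Finset ι) (f g : ι → Ω) (P : Ω → Prop) [DecidablePred P]
    (h : ∀ i ∈ s, P (f i) → P (g i)) (i₀ : ι) (hi₀ : i₀ ∈ s) (hg : P (g i₀)) (hf : ¬ P (f i₀)) :
    Multiset.countP P (s.val.map f) < Multiset.countP P (s.val.map g) := by
  rw [Multiset.countP_map, Multiset.countP_map]
  change (s.filter fun i => P (f i)).card < (s.filter fun i => P (g i)).card
  refine Finset.card_lt_card (Finset.ssubset_iff_of_subset ?_ |>.2 ⟨i₀, ?_, ?_⟩)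
  · intro i hi
    rw [Finset.mem_filter] at hi ⊢
    exact ⟨hi.1, h i hi.1 hi.2⟩
  · exact Finset.mem_filter.2 ⟨hi₀, hg⟩
  · exact fun hi => hf (Finset.mem_filter.1 hi).2

lemma colM_congr (μ : ℕ → ℕ) (k : ℕ) {Ω : Type*} (t v : Box μ → Ω) (j : ℕ)
    (h : ∀ b : Box μ, b.1.2 = j → t b = v b) : colM μ k t j = colM μ k v j :=
  Multiset.map_congr rfl fun _ _ => h _ rfl

/-- Entrywise related columns can be listed, row by row, as related lists. -/
lemma exists_forall₂_colM (μ : ℕ → ℕ) (k : ℕ) {Ω : Type*} (r : Ω → Ω → Prop) (t v : Box μ → Ω)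
    (j : ℕ) (h : ∀ b : Box μ, b.1.2 = j → r (t b) (v b)) :
    ∃ l l' : List Ω, (l : Multiset Ω) = colM μ k t j ∧ (l' : Multiset Ω) = colM μ k v j ∧
      List.Forall₂ r l l' := by
  let s := ((Finset.range k).filter fun i => j < μ i).attach
  refine ⟨s.toList.map fun i => t ⟨(i.1, j), by exact (Finset.mem_filter.mp i.2).2⟩,
    s.toList.map fun i => v ⟨(i.1, j), by exact (Finset.mem_filter.mp i.2).2⟩, ?_, ?_, ?_⟩
  · rw [← Multiset.map_coe, Finset.coe_toList]; rfl
  · rw [← Multiset.map_coe, Finset.coe_toList]; rfl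
  · rw [List.forall₂_map_left_iff, List.forall₂_map_right_iff, List.forall₂_same]
    exact fun i _ => h _ rfl

/-- A non-identity permutation of the boxes has a rightmost column containing a moved box. -/
lemma exists_last_moved_column (μ : ℕ → ℕ) (hμ : ∀ i, μ (i + 1) ≤ μ i) (τ : Equiv.Perm (Box μ))
    (hτ : τ ≠ 1) : ∃ b₀, τ b₀ ≠ b₀ ∧ ∀ b : Box μ, b₀.1.2 < b.1.2 → τ b = b := by
  let S : Set ℕ := {j | ∃ b : Box μ, b.1.2 = j ∧ τ b ≠ b}
  have hne : S.Nonempty := by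
    by_contra hS
    refine hτ (Equiv.ext fun b => ?_)
    by_contra hb
    exact hS ⟨_, b, rfl, hb⟩
  have hbdd : BddAbove S := by
    refine ⟨μ 0, ?_⟩
    rintro _ ⟨b, rfl, -⟩
    exact b.2.le.trans (antitone_nat_of_succ_le hμ (Nat.zero_le _))
  obtain ⟨b₀, hb₀, hmv⟩ := Nat.sSup_mem hne hbdd
  refine ⟨b₀, hmv, fun b hb => ?_⟩
  by_contra hbm
  have := le_csSup hbdd (show b.1.2 ∈ S from ⟨b, rfl, hbm⟩)
  omega

/-- **Lemma 2.5(i) (Paget–Wildon).** Let `⪯` be a pre-order on a set `Ω`, let `γ` (here `μ`) be a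
partition and let `u` be a row-standard `γ`-tableau with entries in `Ω`.  If `σ ∈ RPP(γ)` and
`σ ≠ id` then `u·σ ≺_col u`, i.e. `u·σ ⪯_col u` and not `u ⪯_col u·σ`. -/
theorem rowStandard_placePerm_lt_col {Ω : Type*} (r : Ω → Ω → Prop)
    (hrefl : ∀ a, r a a) (htrans : ∀ a b c, r a b → r b c → r a c)
    (μ : ℕ → ℕ) (hμ : ∀ i, μ (i + 1) ≤ μ i) (k : ℕ) (hk : ∀ i, k ≤ i → μ i = 0)
    (u : Box μ → Ω) (hu : RowStandard μ r u)
    (σ : Equiv.Perm (Box μ)) (hσ : RPP μ σ) (hσ1 : σ ≠ 1) :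
    ColLE μ k r (placePerm μ u σ) u ∧ ¬ ColLE μ k r u (placePerm μ u σ) := by
  classical
  obtain ⟨b₀, hmv, hfix⟩ := exists_last_moved_column μ hμ σ⁻¹ (inv_ne_one.2 hσ1)
  have hrow : ∀ b, (σ⁻¹ b).1.1 = b.1.1 := fun b => by
    simpa using (hσ (σ⁻¹ b)).symm
  have hlt : ∀ b : Box μ, b.1.2 = b₀.1.2 → σ⁻¹ b ≠ b → (σ⁻¹ b).1.2 < b.1.2 := by
    intro b hb hne
    rcases lt_trichotomy (σ⁻¹ b).1.2 b.1.2 with h | h | h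
    · exact h
    · exact absurd (Subtype.ext (Prod.ext (hrow b) h)) hne
    -- A box to the right is fixed, so it cannot be the image of a different box.
    · exact absurd (σ⁻¹.injective (hfix (σ⁻¹ b) (hb ▸ h))) hne
  have hstrict : ∀ b : Box μ, b.1.2 = b₀.1.2 → σ⁻¹ b ≠ b →
      r (u (σ⁻¹ b)) (u b) ∧ ¬ r (u b) (u (σ⁻¹ b)) := by
    intro b hb hne
    have h1 := hlt b hb hne
    have h2 := hrow b
    generalize σ⁻¹ b = c at h1 h2
    obtain ⟨⟨i, j⟩, hc⟩ := c
    obtain ⟨⟨i', j'⟩, hb'⟩ := b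
    obtain rfl : i = i' := h2
    exact hu i j j' hc hb' h1
  have hle : ∀ b : Box μ, b.1.2 = b₀.1.2 → r (placePerm μ u σ b) (u b) := by
    intro b hb
    by_cases hne : σ⁻¹ b = b
    · simpa only [placePerm, hne] using hrefl _
    · exact (hstrict b hb hne).1
  have hright : ∀ j, b₀.1.2 < j → colM μ k (placePerm μ u σ) j = colM μ k u j := by
    intro j hj
    refine colM_congr μ k _ _ j fun b hb => ?_
    rw [placePerm, hfix b (hb ▸ hj)]
  have hk₀ : b₀.1.1 < k := by
    by_contra h
    have h1 := hk _ (not_lt.1 h)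
    have h2 := b₀.2
    omega
  have hcount : Multiset.countP (r (u b₀)) (colM μ k (placePerm μ u σ) b₀.1.2) <
      Multiset.countP (r (u b₀)) (colM μ k u b₀.1.2) :=
    countP_map_lt _ _ _ _ (fun i _ h => htrans _ _ _ h (hle _ rfl))
      ⟨b₀.1.1, Finset.mem_filter.2 ⟨Finset.mem_range.2 hk₀, b₀.2⟩⟩ (Finset.mem_attach _ _)
      (hrefl _) (hstrict b₀ rfl hmv).2
  have hne : colM μ k (placePerm μ u σ) b₀.1.2 ≠ colM μ k u b₀.1.2 := fun h =>
    absurd hcount (by rw [h]; exact lt_irrefl _)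
  refine ⟨Or.inr ⟨b₀.1.2, hne, hright, exists_forall₂_colM μ k r _ _ _ hle⟩, ?_⟩
  rintro (h | ⟨j, hj, hj', l, l', hl, hl', hll⟩)
  · exact hne (h _).symm
  · rcases lt_trichotomy j b₀.1.2 with h | rfl | h
    · exact hne (hj' _ h).symm
    · have := countP_le_of_forall₂ (r (u b₀)) (fun x y hxy hx => htrans _ _ _ hx hxy) hll
      rw [hl, hl'] at this
      omega
    · exact hj (hright j h).symm
end

section
/- Let μ be a partition and let T be a closed conjugate-semistandard tableau family of shape μ^n. Then the weight γ of T is weakly decreasing, i.e., γ_j ≥ γ_{j+1} for every j ≥ 1; in other words, T has a well-defined type. -/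
/-- The multiset of entries of the tableau `t` in row `i`. -/
def rowM (μ : ℕ → ℕ) {Ω : Type*} (t : Box μ → Ω) (i : ℕ) : Multiset Ω :=
  ((Finset.range (μ i)).attach.val).map fun j => t ⟨(i, j.1), Finset.mem_range.mp j.2⟩

/-- A `μ`-tableau with entries in the positive integers is conjugate-semistandard if its rows are
strictly increasing and its columns are weakly increasing. -/
def ConjSemistandard (μ : ℕ → ℕ) (t : Box μ → ℕ) : Prop :=
  (∀ b, 1 ≤ t b) ∧
  (∀ i j j' (h : j < μ i) (h' : j' < μ i), j < j' → t ⟨(i, j), h⟩ < t ⟨(i, j'), h'⟩) ∧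
  (∀ i i' j (h : j < μ i) (h' : j < μ i'), i < i' → t ⟨(i, j), h⟩ ≤ t ⟨(i', j), h'⟩)

/-- The number of boxes of the tableau `t` (whose shape has at most `k` rows) with entry `e`. -/
def entryCount (μ : ℕ → ℕ) (k : ℕ) (t : Box μ → ℕ) (e : ℕ) : ℕ :=
  ∑ i ∈ Finset.range k, (rowM μ t i).count e

/-- The weight of a family of tableaux: `familyWeight μ k T e` is the total number of boxes with
entry `e` over all the tableaux in `T`. -/
def familyWeight (μ : ℕ → ℕ) (k : ℕ) (T : Finset (Box μ → ℕ)) (e : ℕ) : ℕ :=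
  ∑ t ∈ T, entryCount μ k t e

/-- For conjugate-semistandard tableaux (whose rows are strictly increasing), `v` majorizes `u`,
written `u ⪯_maj v`, exactly when each row of `v` majorizes the corresponding row of `u`,
i.e. when the entries compare box-by-box. -/
def Maj (μ : ℕ → ℕ) (u v : Box μ → ℕ) : Prop := ∀ b, u b ≤ v b

/-- A conjugate-semistandard tableau family is closed if it is downwards closed under the
majorization order. -/
def ClosedFamily (μ : ℕ → ℕ) (T : Finset (Box μ → ℕ)) : Prop :=
  ∀ v ∈ T, ∀ u, ConjSemistandard μ u → Maj μ u v → u ∈ T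

/-- A (1-indexed) weight `w` is weakly decreasing when `w (j+1) ≤ w j` for all `j ≥ 1`. -/
def WeaklyDecr (w : ℕ → ℕ) : Prop := ∀ j, 1 ≤ j → w (j + 1) ≤ w j

/-- The conjugate of a (1-indexed) finitely supported sequence `w` whose support is contained in
`{1, …, N}`:  `conjOf w N i = #{j ≥ 1 : w j ≥ i}`. -/
def conjOf (w : ℕ → ℕ) (N : ℕ) (i : ℕ) : ℕ :=
  ((Finset.Icc 1 N).filter fun j => i ≤ w j).card

/-- Dominance order on (1-indexed) sequences: `f ⊴ g` iff every partial sum of `f` is at most the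
corresponding partial sum of `g`. -/
def DomLE (f g : ℕ → ℕ) : Prop :=
  ∀ s, ∑ j ∈ Finset.Icc 1 s, f j ≤ ∑ j ∈ Finset.Icc 1 s, g j

/-- Strict lexicographic order on (1-indexed) sequences. -/
def LexLT (f g : ℕ → ℕ) : Prop :=
  ∃ j, 1 ≤ j ∧ (∀ j', 1 ≤ j' → j' < j → f j' = g j') ∧ f j < g j

/-- Lexicographic order on (1-indexed) sequences. -/
def LexLE (f g : ℕ → ℕ) : Prop := (∀ j, 1 ≤ j → f j = g j) ∨ LexLT f g

/-! ### Sign-reversing involutions and reversal of intervals -/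

lemma sum_nonneg_of_invol {α : Type*} [DecidableEq α] (T : Finset α) (f : α → ℤ) (σ : α → α)
    (h1 : ∀ t ∈ T, f t < 0 → σ t ∈ T) (h2 : ∀ t ∈ T, f (σ t) = - f t)
    (h3 : ∀ t ∈ T, σ (σ t) = t) : 0 ≤ ∑ t ∈ T, f t := by
  rw [← Finset.sum_filter_add_sum_filter_not T (fun t => f t < 0)]
  have hinj : Set.InjOn σ (T.filter (fun t => f t < 0) : Finset α) := by
    intro a ha b hb hab
    simp only [Finset.coe_filter, Set.mem_ofPred_eq] at ha hb
    rw [← h3 a ha.1, hab, h3 b hb.1]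
  have hsub : (T.filter (fun t => f t < 0)).image σ ⊆ T.filter (fun t => ¬ f t < 0) := by
    intro x hx
    simp only [Finset.mem_image, Finset.mem_filter] at hx ⊢
    obtain ⟨a, ⟨ha, hfa⟩, rfl⟩ := hx
    refine ⟨h1 a ha hfa, ?_⟩
    rw [h2 a ha]
    omega
  have hle := Finset.sum_le_sum_of_subset_of_nonneg (f := f) hsub (by
    intro i hi _
    have := (Finset.mem_filter.mp hi).2
    omega)
  rw [Finset.sum_image hinj] at hle
  have : ∑ x ∈ T.filter (fun t => f t < 0), f (σ x)
      = - ∑ x ∈ T.filter (fun t => f t < 0), f x := by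
    rw [← Finset.sum_neg_distrib]
    exact Finset.sum_congr rfl fun x hx => h2 x (Finset.mem_filter.mp hx).1
  omega

/-- The sum of the least and the greatest element of `F`; for an interval `F` in `ℕ` the map
`i ↦ endSum F - i` is the order-reversing bijection of `F`. -/
noncomputable def endSum (F : Finset ℕ) : ℕ := sInf (F : Set ℕ) + F.sup id

lemma endSum_spec (F : Finset ℕ) (hF : ∀ p q i, p ∈ F → q ∈ F → p ≤ i → i ≤ q → i ∈ F)
    {i : ℕ} (hi : i ∈ F) : i ≤ endSum F ∧ endSum F - i ∈ F := by
  have h1 : sInf (F : Set ℕ) ∈ F := Nat.sInf_mem (s := (F : Set ℕ)) ⟨i, hi⟩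
  have h2 : sInf (F : Set ℕ) ≤ i := Nat.sInf_le (s := (F : Set ℕ)) hi
  obtain ⟨m, hm, hm'⟩ := Finset.exists_mem_eq_sup F ⟨i, hi⟩ id
  have h3 : i ≤ F.sup id := Finset.le_sup (f := id) hi
  simp only [id] at hm'
  have hm'' : F.sup id = m := hm'
  unfold endSum
  rw [hm''] at h3 ⊢
  refine ⟨by omega, hF _ _ _ h1 hm (by omega) (by omega)⟩

/-! ### Tableaux extended by zero -/

/-- The tableau `t` as a function of row and column, extended by `0` outside the diagram. The
value `0` is never an entry of a conjugate-semistandard tableau. -/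
def extT {μ : ℕ → ℕ} (t : Box μ → ℕ) (i c : ℕ) : ℕ :=
  if h : c < μ i then t ⟨(i, c), h⟩ else 0

section
variable {μ : ℕ → ℕ} {t : Box μ → ℕ}

lemma extT_in {i c : ℕ} (h : c < μ i) : extT t i c = t ⟨(i, c), h⟩ := dif_pos h

lemma extT_out {i c : ℕ} (h : ¬ c < μ i) : extT t i c = 0 := dif_neg h

lemma lt_of_extT {i c : ℕ} (h : extT t i c ≠ 0) : c < μ i := by
  by_contra h'
  exact h (extT_out h')

lemma extT_row (ht : ConjSemistandard μ t) {i c c' : ℕ} (h : c < c') (h' : c' < μ i) :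
    extT t i c < extT t i c' := by
  rw [extT_in h', extT_in (h.trans h')]
  exact ht.2.1 _ _ _ _ _ h

lemma extT_col (ht : ConjSemistandard μ t) (hμ : Antitone μ) {i i' c : ℕ} (h : i ≤ i')
    (h' : c < μ i') : extT t i c ≤ extT t i' c := by
  rcases h.eq_or_lt with rfl | h
  · exact le_rfl
  · rw [extT_in h', extT_in (h'.trans_le (hμ h.le))]
    exact ht.2.2 _ _ _ _ _ h

lemma extT_pos (ht : ConjSemistandard μ t) {i c : ℕ} (h : c < μ i) : 1 ≤ extT t i c := by
  rw [extT_in h]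
  exact ht.1 _

/-! ### Free rows -/

/-- Row `i` is free in column `c`: the entry there is `j` or `j + 1`, its right neighbour is not
`j + 1` and its left neighbour is not `j`. -/
def Free (j c : ℕ) (t : Box μ → ℕ) (i : ℕ) : Prop :=
  (extT t i c = j ∨ extT t i c = j + 1) ∧ extT t i (c + 1) ≠ j + 1 ∧
    ¬ (c ≠ 0 ∧ extT t i (c - 1) = j)

instance (j c : ℕ) (t : Box μ → ℕ) : DecidablePred (Free j c t) := fun _ => by
  unfold Free; infer_instance

/-- The set of rows, among the first `k`, that are free in column `c`. -/
def freeRows (k j c : ℕ) (t : Box μ → ℕ) : Finset ℕ := (Finset.range k).filter (Free j c t)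

/-- `1` for the entry `j`, `-1` for the entry `j + 1` and `0` for all others. -/
def sgn (j e : ℕ) : ℤ := (if e = j then 1 else 0) - (if e = j + 1 then 1 else 0)

/-- The number of entries `j` minus the number of entries `j + 1` in the free rows of
column `c`. -/
def freeDiff (k j c : ℕ) (t : Box μ → ℕ) : ℤ := ∑ i ∈ freeRows k j c t, sgn j (extT t i c)

/-- Turn the interval of free rows of column `c` upside down and exchange `j` with `j + 1` in it. -/
noncomputable def swapCol (k j c : ℕ) (t : Box μ → ℕ) : Box μ → ℕ := fun b =>
  if b.1.2 = c ∧ b.1.1 ∈ freeRows k j c t then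
    2 * j + 1 - extT t (endSum (freeRows k j c t) - b.1.1) c
  else t b

variable {k j c : ℕ}

lemma mem_freeRows {i : ℕ} : i ∈ freeRows k j c t ↔ i < k ∧ Free j c t i := by
  simp [freeRows]

lemma Free.lt (hj : 1 ≤ j) {i : ℕ} (h : Free j c t i) : c < μ i :=
  lt_of_extT (t := t) (by rcases h.1 with h | h <;> omega)

/-- The free rows of a column form an interval: a pair `j, j + 1` in a row between two free rows
would force the same pair in the upper or in the lower of them. -/
lemma freeRows_conv (ht : ConjSemistandard μ t) (hμ : Antitone μ) (hj : 1 ≤ j) :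
    ∀ p q i, p ∈ freeRows k j c t → q ∈ freeRows k j c t → p ≤ i → i ≤ q →
      i ∈ freeRows k j c t := by
  intro p q i hp hq hpi hiq
  rw [mem_freeRows] at hp hq ⊢
  have hcq := hq.2.lt hj
  have hci : c < μ i := hcq.trans_le (hμ hiq)
  have e1 := extT_col ht hμ hpi hci
  have e2 := extT_col ht hμ hiq hcq
  obtain ⟨hpk, hp1, hp2, hp3⟩ := hp
  obtain ⟨hqk, hq1, hq2, hq3⟩ := hq
  refine ⟨by omega, by omega, fun h => ?_, fun ⟨h0, h⟩ => ?_⟩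
  · have hc1 : c + 1 < μ i := lt_of_extT (t := t) (by omega)
    have e3 := extT_col ht hμ hpi hc1
    have e4 := extT_row ht (Nat.lt_succ_self c) (hc1.trans_le (hμ hpi))
    have e5 := extT_row ht (Nat.lt_succ_self c) hc1
    simp only [Nat.succ_eq_add_one] at *
    omega
  · have e3 := extT_col ht hμ hiq (show c - 1 < μ q by omega)
    have e4 := extT_row ht (show c - 1 < c by omega) hcq
    have e5 := extT_row ht (show c - 1 < c by omega) hci
    apply hq3
    omega

lemma freeRows_rev (ht : ConjSemistandard μ t) (hμ : Antitone μ) (hj : 1 ≤ j) {i : ℕ}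
    (hi : i ∈ freeRows k j c t) : i ≤ endSum (freeRows k j c t) ∧
      endSum (freeRows k j c t) - i ∈ freeRows k j c t :=
  endSum_spec _ (freeRows_conv ht hμ hj) hi

/-! ### The involution -/

lemma extT_swapCol_free (hj : 1 ≤ j) {i : ℕ} (hi : i ∈ freeRows k j c t) :
    extT (swapCol k j c t) i c = 2 * j + 1 - extT t (endSum (freeRows k j c t) - i) c := by
  rw [extT_in ((mem_freeRows.mp hi).2.lt hj)]
  simp [swapCol, hi]

lemma extT_swapCol_other {i c' : ℕ} (h : ¬ (c' = c ∧ i ∈ freeRows k j c t)) :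
    extT (swapCol k j c t) i c' = extT t i c' := by
  unfold extT
  split_ifs
  · simp [swapCol, h]
  · rfl

lemma swapCol_mem (ht : ConjSemistandard μ t) (hμ : Antitone μ) (hj : 1 ≤ j) {i : ℕ}
    (hi : i ∈ freeRows k j c t) :
    extT (swapCol k j c t) i c = j ∨ extT (swapCol k j c t) i c = j + 1 := by
  rw [extT_swapCol_free hj hi]
  have := (mem_freeRows.mp (freeRows_rev ht hμ hj hi).2).2.1
  omega

lemma freeRows_swapCol (ht : ConjSemistandard μ t) (hμ : Antitone μ) (hj : 1 ≤ j) :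
    freeRows k j c (swapCol k j c t) = freeRows k j c t := by
  ext i
  have h1 : extT (swapCol k j c t) i (c + 1) = extT t i (c + 1) :=
    extT_swapCol_other (by simp)
  have h2 : c ≠ 0 → extT (swapCol k j c t) i (c - 1) = extT t i (c - 1) := fun h =>
    extT_swapCol_other (by omega)
  by_cases hi : i ∈ freeRows k j c t
  · have h3 := swapCol_mem ht hμ hj hi
    have h4 := mem_freeRows.mp hi
    simp only [hi, iff_true]
    rw [mem_freeRows]
    refine ⟨h4.1, h3, by rw [h1]; exact h4.2.2.1, fun ⟨h0, h⟩ => h4.2.2.2 ⟨h0, ?_⟩⟩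
    rw [← h2 h0, h]
  · have h3 : extT (swapCol k j c t) i c = extT t i c := extT_swapCol_other (by simp [hi])
    simp only [hi, iff_false]
    rw [mem_freeRows] at hi ⊢
    rintro ⟨hk, ha, hb, hc⟩
    rw [h3] at ha
    rw [h1] at hb
    refine hi ⟨hk, ha, hb, fun ⟨h0, h⟩ => hc ⟨h0, ?_⟩⟩
    rw [h2 h0, h]

lemma swapCol_swapCol (ht : ConjSemistandard μ t) (hμ : Antitone μ) (hj : 1 ≤ j) :
    swapCol k j c (swapCol k j c t) = t := by
  funext b
  obtain ⟨⟨i, c'⟩, (hb : c' < μ i)⟩ := b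
  have hF := freeRows_swapCol (k := k) (c := c) ht hμ hj
  rw [← extT_in (t := swapCol k j c (swapCol k j c t)) hb, ← extT_in (t := t) hb]
  by_cases h : c' = c ∧ i ∈ freeRows k j c t
  · obtain ⟨rfl, hi⟩ := h
    obtain ⟨h1, h2⟩ := freeRows_rev ht hμ hj hi
    rw [extT_swapCol_free hj (by rwa [hF]), hF, extT_swapCol_free hj h2]
    have h3 := (mem_freeRows.mp hi).2.1
    rw [Nat.sub_sub_self h1]
    omega
  · rw [extT_swapCol_other (by rwa [hF]), extT_swapCol_other h]

lemma sgn_swap {e : ℕ} (h : e = j ∨ e = j + 1) : sgn j (2 * j + 1 - e) = - sgn j e := by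
  rcases h with rfl | rfl
  · have : 2 * e + 1 - e = e + 1 := by omega
    simp [sgn, this]
  · have : 2 * j + 1 - (j + 1) = j := by omega
    simp [sgn, this]

lemma sum_rev (ht : ConjSemistandard μ t) (hμ : Antitone μ) (hj : 1 ≤ j) (f : ℕ → ℤ) :
    ∑ i ∈ freeRows k j c t, f (endSum (freeRows k j c t) - i) = ∑ i ∈ freeRows k j c t, f i := by
  refine Finset.sum_nbij' (fun i => endSum (freeRows k j c t) - i)
    (fun i => endSum (freeRows k j c t) - i) ?_ ?_ ?_ ?_ ?_
  · exact fun i hi => (freeRows_rev ht hμ hj hi).2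
  · exact fun i hi => (freeRows_rev ht hμ hj hi).2
  · exact fun i hi => Nat.sub_sub_self (freeRows_rev ht hμ hj hi).1
  · exact fun i hi => Nat.sub_sub_self (freeRows_rev ht hμ hj hi).1
  · exact fun i hi => rfl

lemma freeDiff_swapCol (ht : ConjSemistandard μ t) (hμ : Antitone μ) (hj : 1 ≤ j) :
    freeDiff k j c (swapCol k j c t) = - freeDiff k j c t := by
  unfold freeDiff
  rw [freeRows_swapCol ht hμ hj, ← sum_rev ht hμ hj (fun i => sgn j (extT t i c)),
    ← Finset.sum_neg_distrib]
  refine Finset.sum_congr rfl fun i hi => ?_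
  rw [extT_swapCol_free hj hi]
  exact sgn_swap (mem_freeRows.mp (freeRows_rev ht hμ hj hi).2).2.1

lemma swapCol_css (ht : ConjSemistandard μ t) (hμ : Antitone μ) (hk : ∀ i, k ≤ i → μ i = 0)
    (hj : 1 ≤ j) :
    ConjSemistandard μ (swapCol k j c t) := by
  refine ⟨?_, ?_, ?_⟩
  · rintro ⟨⟨i, c'⟩, (h : c' < μ i)⟩
    rw [← extT_in (t := swapCol k j c t) h]
    by_cases hi : c' = c ∧ i ∈ freeRows k j c t
    · obtain ⟨rfl, hi⟩ := hi
      have := swapCol_mem ht hμ hj hi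
      omega
    · rw [extT_swapCol_other hi]
      exact extT_pos ht h
  · intro i a b ha hb hab
    rw [← extT_in (t := swapCol k j c t) ha, ← extT_in (t := swapCol k j c t) hb]
    have hr := extT_row ht hab hb
    by_cases hi : i ∈ freeRows k j c t
    · have hm := swapCol_mem ht hμ hj hi
      obtain ⟨_, h1, h2, h3⟩ := mem_freeRows.mp hi
      by_cases hac : a = c
      · -- to the right of a free entry all entries are at least `j + 2`
        subst hac
        rw [extT_swapCol_other (c' := b) (by omega)]
        have e1 := extT_row ht (Nat.lt_succ_self a) (show a + 1 < μ i by omega)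
        have e2 : extT t i (a + 1) ≤ extT t i b := by
          rcases (show a + 1 ≤ b from hab).eq_or_lt with rfl | h
          · exact le_rfl
          · exact (extT_row ht h hb).le
        simp only [Nat.succ_eq_add_one] at *
        omega
      · rw [extT_swapCol_other (c' := a) (by omega)]
        by_cases hbc : b = c
        · -- to the left of a free entry all entries are at most `j - 1`
          subst hbc
          have e1 := extT_row ht (show b - 1 < b by omega) hb
          have e2 : extT t i a ≤ extT t i (b - 1) := by
            rcases (show a ≤ b - 1 by omega).eq_or_lt with h | h
            · rw [h]
            · exact (extT_row ht h (by omega)).le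
          have e3 : extT t i (b - 1) ≠ j := fun h => h3 ⟨by omega, h⟩
          omega
        · rw [extT_swapCol_other (c' := b) (by omega)]
          exact hr
    · rw [extT_swapCol_other (by simp [hi]), extT_swapCol_other (by simp [hi])]
      exact hr
  · intro i i' c' h h' hii
    rw [← extT_in (t := swapCol k j c t) h, ← extT_in (t := swapCol k j c t) h']
    have hcol := extT_col ht hμ hii.le h'
    by_cases hc : c' = c
    swap
    · rw [extT_swapCol_other (by simp [hc]), extT_swapCol_other (by simp [hc])]
      exact hcol
    subst hc
    by_cases hi : i ∈ freeRows k j c' t <;> by_cases hi' : i' ∈ freeRows k j c' t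
    · rw [extT_swapCol_free hj hi, extT_swapCol_free hj hi']
      have h1 := freeRows_rev ht hμ hj hi
      have := extT_col ht hμ (show endSum (freeRows k j c' t) - i' ≤
        endSum (freeRows k j c' t) - i by omega) ((mem_freeRows.mp h1.2).2.lt hj)
      omega
    · rw [extT_swapCol_other (i := i') (by simp [hi'])]
      have hm := swapCol_mem ht hμ hj hi
      obtain ⟨hik, h1, h2, h3⟩ := mem_freeRows.mp hi
      by_contra hlt
      -- row `i'` contains the pair `j, j + 1`, which then also occurs in row `i`
      have hj' : extT t i' c' = j := by omega
      have hk' : i' < k := by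
        by_contra hx
        have := hk i' (by omega)
        omega
      have hx : extT t i' (c' + 1) = j + 1 := by
        by_contra hx
        refine hi' (mem_freeRows.mpr ⟨hk', Or.inl hj', hx, fun ⟨h0, hy⟩ => ?_⟩)
        have := extT_row ht (show c' - 1 < c' by omega) h'
        omega
      have hc1 : c' + 1 < μ i' := lt_of_extT (t := t) (by omega)
      have e1 := extT_col ht hμ hii.le hc1
      have e2 := extT_row ht (show c' < c' + 1 by omega) (hc1.trans_le (hμ hii.le))
      omega
    · rw [extT_swapCol_other (i := i) (by simp [hi])]
      have hm := swapCol_mem ht hμ hj hi'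
      obtain ⟨hik, h1, h2, h3⟩ := mem_freeRows.mp hi'
      by_contra hlt
      -- row `i` contains the pair `j, j + 1`, which then also occurs in row `i'`
      have hj' : extT t i c' = j + 1 := by omega
      have hx : c' ≠ 0 ∧ extT t i (c' - 1) = j := by
        by_contra hx
        refine hi (mem_freeRows.mpr ⟨by omega, Or.inr hj', fun hy => ?_, hx⟩)
        have := extT_row ht (Nat.lt_succ_self c') (lt_of_extT (t := t) (i := i) (by
          simp only [Nat.succ_eq_add_one]; omega))
        simp only [Nat.succ_eq_add_one] at *
        omega
      have e1 := extT_col ht hμ hii.le (show c' - 1 < μ i' by omega)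
      have e2 := extT_row ht (show c' - 1 < c' by omega) h'
      exact h3 ⟨hx.1, by omega⟩
    · rw [extT_swapCol_other (by simp [hi]), extT_swapCol_other (by simp [hi'])]
      exact hcol

/-- If swapping raised an entry `j` at `i`, then `i` and its mirror image would both carry `j`; by
monotonicity of the column every mirror pair of free rows would contain a `j`, forcing
`freeDiff` to be nonnegative. -/
lemma swapCol_le (ht : ConjSemistandard μ t) (hμ : Antitone μ) (hj : 1 ≤ j)
    (hneg : freeDiff k j c t < 0) : Maj μ (swapCol k j c t) t := by
  rintro ⟨⟨i, c'⟩, (h : c' < μ i)⟩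
  rw [← extT_in (t := swapCol k j c t) h, ← extT_in (t := t) h]
  by_cases hi : c' = c ∧ i ∈ freeRows k j c t
  swap
  · rw [extT_swapCol_other hi]
  obtain ⟨rfl, hi⟩ := hi
  rw [extT_swapCol_free hj hi]
  obtain ⟨h1, h2⟩ := freeRows_rev ht hμ hj hi
  have h3 := (mem_freeRows.mp hi).2.1
  have h4 := (mem_freeRows.mp h2).2.1
  by_contra hlt
  have h5 : extT t i c' = j := by omega
  have h6 : extT t (endSum (freeRows k j c' t) - i) c' = j := by omega
  have h7 : 0 ≤ freeDiff k j c' t + freeDiff k j c' t := by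
    conv_rhs => lhs; unfold freeDiff; rw [← sum_rev ht hμ hj (fun i => sgn j (extT t i c'))]
    unfold freeDiff
    rw [← Finset.sum_add_distrib]
    refine Finset.sum_nonneg fun i' hi' => ?_
    obtain ⟨g1, g2⟩ := freeRows_rev ht hμ hj hi'
    have g3 := (mem_freeRows.mp hi').2.1
    have g4 := (mem_freeRows.mp g2).2.1
    have g5 : extT t i' c' = j ∨ extT t (endSum (freeRows k j c' t) - i') c' = j := by
      rcases le_total i' i with hx | hx
      · have := extT_col ht hμ hx h
        omega
      · have := extT_col ht hμ (show endSum (freeRows k j c' t) - i' ≤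
          endSum (freeRows k j c' t) - i by omega) ((mem_freeRows.mp h2).2.lt hj)
        omega
    unfold sgn
    split_ifs <;> omega
  omega

/-! ### Weights -/

lemma count_row (i N : ℕ) (hN : μ i ≤ N) {e : ℕ} (he : 1 ≤ e) :
    (rowM μ t i).count e = ∑ c ∈ Finset.range N, if extT t i c = e then 1 else 0 := by
  have h1 : rowM μ t i = (Multiset.range (μ i)).map (extT t i) := by
    have h2 : rowM μ t i = (Finset.range (μ i)).attach.val.map (fun x => extT t i x.1) :=
      Multiset.map_congr rfl fun x _ => (extT_in (Finset.mem_range.mp x.2)).symm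
    rw [h2, Finset.attach_val]
    exact Multiset.attach_map_val' (Finset.range (μ i)).val (extT t i)
  have h3 : ∑ c ∈ Finset.range N, (if extT t i c = e then 1 else 0)
      = ∑ c ∈ Finset.range (μ i), if extT t i c = e then 1 else 0 := by
    symm
    refine Finset.sum_subset (Finset.range_mono hN) fun c _ hc => ?_
    rw [extT_out (by simpa using hc), if_neg (by omega)]
  rw [h3, h1, Multiset.count_map, ← Finset.card_filter]
  simp only [Finset.card_def, Finset.filter_val, Finset.range_val, eq_comm]

/-- In each row the pairs `j, j + 1` cancel, so only the columns in which the row is free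
contribute. -/
lemma row_sum (ht : ConjSemistandard μ t) (hj : 1 ≤ j) (i N : ℕ) (hN : μ i ≤ N) :
    ∑ c ∈ Finset.range N, sgn j (extT t i c)
      = ∑ c ∈ Finset.range N, if Free j c t i then sgn j (extT t i c) else 0 := by
  -- `Q c` indicates that the row has the pair `j, j + 1` in columns `c - 1, c`
  let Q : ℕ → ℤ := fun c => if c ≠ 0 ∧ extT t i (c - 1) = j ∧ extT t i c = j + 1 then 1 else 0
  have hQ0 : Q 0 = 0 := by simp [Q]
  have hQN : Q N = 0 := by
    have : extT t i N = 0 := extT_out (by omega)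
    simp [Q, this]
  have hstep : ∀ c, sgn j (extT t i c)
      = (if Free j c t i then sgn j (extT t i c) else 0) + (Q (c + 1) - Q c) := by
    intro c
    have e1 : extT t i (c + 1) ≠ 0 → extT t i c < extT t i (c + 1) := fun h =>
      extT_row ht (Nat.lt_succ_self c) (lt_of_extT h)
    have e2 : c ≠ 0 → extT t i c ≠ 0 → extT t i (c - 1) < extT t i c := fun h0 h =>
      extT_row ht (by omega) (lt_of_extT h)
    by_cases hf : Free j c t i
    · rw [if_pos hf]
      unfold Free at hf
      simp only [Q, sgn, Nat.add_sub_cancel]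
      split_ifs <;> omega
    · rw [if_neg hf]
      unfold Free at hf
      simp only [Q, sgn, Nat.add_sub_cancel]
      split_ifs <;> omega
  rw [Finset.sum_congr rfl fun c _ => hstep c, Finset.sum_add_distrib, Finset.sum_range_sub,
    hQ0, hQN]
  simp

lemma entryCount_diff (ht : ConjSemistandard μ t) (hμ : Antitone μ) (hj : 1 ≤ j) :
    (entryCount μ k t j : ℤ) - entryCount μ k t (j + 1)
      = ∑ c ∈ Finset.range (μ 0), freeDiff k j c t := by
  have h1 : ∀ i, ((rowM μ t i).count j : ℤ) - (rowM μ t i).count (j + 1)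
      = ∑ c ∈ Finset.range (μ 0), if Free j c t i then sgn j (extT t i c) else 0 := by
    intro i
    rw [← row_sum ht hj i (μ 0) (hμ (Nat.zero_le i)), count_row i (μ 0) (hμ (Nat.zero_le i)) hj,
      count_row i (μ 0) (hμ (Nat.zero_le i)) (by omega : 1 ≤ j + 1)]
    push_cast
    rw [← Finset.sum_sub_distrib]
    rfl
  unfold entryCount freeDiff freeRows
  push_cast
  rw [← Finset.sum_sub_distrib, Finset.sum_congr rfl fun i _ => h1 i, Finset.sum_comm]
  exact Finset.sum_congr rfl fun c _ => (Finset.sum_filter _ _).symm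

end

/-- **Proposition 2.11 (Paget–Wildon).** If `T` is a closed conjugate-semistandard tableau family
of shape `μ^n`, then the weight `γ` of `T` satisfies `γ_j ≥ γ_{j+1}` for every `j ≥ 1`;
that is, `T` has a well-defined type. -/
theorem closedFamily_weight_weaklyDecr
    (μ : ℕ → ℕ) (hμ : ∀ i, μ (i + 1) ≤ μ i) (k : ℕ) (hk : ∀ i, k ≤ i → μ i = 0)
    (n : ℕ) (T : Finset (Box μ → ℕ)) (hcard : T.card = n)
    (hcss : ∀ t ∈ T, ConjSemistandard μ t)
    (hclosed : ClosedFamily μ T) :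
    ∀ j, 1 ≤ j → familyWeight μ k T (j + 1) ≤ familyWeight μ k T j := by
  classical
  intro j hj
  have hanti : Antitone μ := antitone_nat_of_succ_le hμ
  have hcol : ∀ c, 0 ≤ ∑ t ∈ T, freeDiff k j c t := fun c =>
    sum_nonneg_of_invol T (freeDiff k j c) (swapCol k j c)
      (fun t ht hneg => hclosed t ht _ (swapCol_css (hcss t ht) hanti hk hj)
        (swapCol_le (hcss t ht) hanti hj hneg))
      (fun t ht => freeDiff_swapCol (hcss t ht) hanti hj)
      (fun t ht => swapCol_swapCol (hcss t ht) hanti hj)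
  have hdiff : (familyWeight μ k T j : ℤ) - familyWeight μ k T (j + 1)
      = ∑ c ∈ Finset.range (μ 0), ∑ t ∈ T, freeDiff k j c t := by
    unfold familyWeight
    push_cast
    rw [← Finset.sum_sub_distrib,
      Finset.sum_congr rfl fun t ht => entryCount_diff (hcss t ht) hanti hj, Finset.sum_comm]
  have := Finset.sum_nonneg fun c (_ : c ∈ Finset.range (μ 0)) => hcol c
  omega
end

section
/- Let μ be a partition of m and let T be a conjugate-semistandard tableau family of shape μ^n whose weight is weakly decreasing, and suppose the type of T is minimal in the dominance order: there is no conjugate-semistandard tableau family S of shape μ^n whose weight is weakly decreasing and whose type λ^S satisfies λ^S ⊴ λ^T and λ^S ≠ λ^T. Then T is closed. -/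
/-! ### Counting boxes -/

open Finset in
/-- The cardinality of an initial segment of `ℕ` bounded by `k` determines the segment. -/
lemma lt_card_filter_iff {k : ℕ} {P : ℕ → Prop} [DecidablePred P]
    (hdown : ∀ i i', i' ≤ i → P i → P i')
    (hbd : ∀ i, P i → i < k) (i : ℕ) : i < #{i ∈ range k | P i} ↔ P i := by
  constructor
  · intro h
    by_contra hP
    have : #{i ∈ range k | P i} ≤ #(range i) := by
      apply card_le_card
      intro a ha
      rw [mem_filter] at ha
      rw [mem_range]
      by_contra hlt
      exact hP (hdown a i (by omega) ha.2)
    rw [card_range] at this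
    omega
  · intro h
    have : #(range (i + 1)) ≤ #{i ∈ range k | P i} := by
      apply card_le_card
      intro a ha
      rw [mem_range] at ha
      have := hdown i a (by omega) h
      rw [mem_filter, mem_range]
      exact ⟨hbd a this, this⟩
    rw [card_range] at this
    omega

open Classical in
/-- The number of boxes in column `j` of `t` with entry at most `x`. -/
noncomputable def colA (μ : ℕ → ℕ) (k : ℕ) (t : Box μ → ℕ) (j x : ℕ) : ℕ :=
  ((Finset.range k).filter fun i => ∃ h : j < μ i, t ⟨(i, j), h⟩ ≤ x).card

/-- The number of boxes of `t` with entry at most `x`. -/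
def cnt (μ : ℕ → ℕ) [Fintype (Box μ)] (t : Box μ → ℕ) (x : ℕ) : ℕ :=
  (Finset.univ.filter fun b => t b ≤ x).card

/-- In a conjugate-semistandard tableau the boxes of column `j` with entry at most `x` are
those in the first `colA μ k t j x` rows. -/
lemma lt_colA_iff {μ : ℕ → ℕ} (hμ : Antitone μ) {k : ℕ} (hk : ∀ i, k ≤ i → μ i = 0)
    {t : Box μ → ℕ} (ht : ConjSemistandard μ t) (i j x : ℕ) :
    i < colA μ k t j x ↔ ∃ h : j < μ i, t ⟨(i, j), h⟩ ≤ x := by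
  classical
  unfold colA
  convert lt_card_filter_iff (k := k) (P := fun i => ∃ h : j < μ i, t ⟨(i, j), h⟩ ≤ x) ?_ ?_ i
  · rintro i i' hi ⟨h, hx⟩
    have h' : j < μ i' := lt_of_lt_of_le h (hμ hi)
    refine ⟨h', ?_⟩
    rcases hi.eq_or_lt with rfl | hi
    · exact hx
    · exact (ht.2.2 i' i j h' h hi).trans hx
  · rintro i ⟨h, -⟩
    by_contra hc
    rw [hk i (by omega)] at h
    omega

/-- A sum over the boxes as a sum over a bounding rectangle, extended by zero. -/
lemma sum_box {μ : ℕ → ℕ} (hμ : Antitone μ) {k : ℕ} (hk : ∀ i, k ≤ i → μ i = 0)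
    [Fintype (Box μ)] (f : Box μ → ℕ) :
    ∑ b, f b = ∑ i ∈ Finset.range k, ∑ j ∈ Finset.range (μ 0),
      if h : j < μ i then f ⟨(i, j), h⟩ else 0 := by
  classical
  rw [← Finset.sum_product' (Finset.range k) (Finset.range (μ 0))
    (fun i j => if h : j < μ i then f ⟨(i, j), h⟩ else 0)]
  have h1 : ∑ b, f b = ∑ p ∈ Finset.univ.image (Subtype.val : Box μ → ℕ × ℕ),
      if h : p.2 < μ p.1 then f ⟨(p.1, p.2), h⟩ else 0 := by
    rw [Finset.sum_image (fun a _ b _ h => Subtype.ext h)]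
    apply Finset.sum_congr rfl
    intro b _
    rw [dif_pos b.2]
  rw [h1]
  apply Finset.sum_subset
  · intro p hp
    obtain ⟨b, -, rfl⟩ := Finset.mem_image.mp hp
    have hb := b.2
    rw [Finset.mem_product, Finset.mem_range, Finset.mem_range]
    refine ⟨?_, lt_of_lt_of_le hb (hμ (Nat.zero_le _))⟩
    by_contra hc
    rw [hk _ (by omega)] at hb
    omega
  · intro p _ hp
    rw [dif_neg]
    intro h
    exact hp (Finset.mem_image.mpr ⟨⟨p, h⟩, Finset.mem_univ _, rfl⟩)

lemma sum_row_dite {μ : ℕ → ℕ} (hμ : Antitone μ) (f : Box μ → ℕ) (i : ℕ) :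
    ∑ j ∈ Finset.range (μ 0), (if h : j < μ i then f ⟨(i, j), h⟩ else 0) =
      ∑ j ∈ (Finset.range (μ i)).attach, f ⟨(i, j.1), Finset.mem_range.mp j.2⟩ := by
  have : ∑ j ∈ Finset.range (μ i), (if h : j < μ i then f ⟨(i, j), h⟩ else 0) =
      ∑ j ∈ Finset.range (μ 0), (if h : j < μ i then f ⟨(i, j), h⟩ else 0) := by
    apply Finset.sum_subset
    · exact Finset.range_mono (hμ (Nat.zero_le _))
    · intro j _ hj
      rw [dif_neg]
      simpa using hj
  rw [← this, ← Finset.sum_attach]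
  apply Finset.sum_congr rfl
  intro j _
  rw [dif_pos (Finset.mem_range.mp j.2)]

lemma entryCount_eq {μ : ℕ → ℕ} (hμ : Antitone μ) {k : ℕ} (hk : ∀ i, k ≤ i → μ i = 0)
    [Fintype (Box μ)] (t : Box μ → ℕ) (e : ℕ) :
    entryCount μ k t e = ∑ b, if t b = e then 1 else 0 := by
  rw [sum_box hμ hk]
  unfold entryCount
  apply Finset.sum_congr rfl
  intro i _
  rw [sum_row_dite hμ (fun b => if t b = e then 1 else 0), rowM, Multiset.count_map,
    ← Finset.card_filter, Finset.card_def, Finset.filter_val]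
  simp only [eq_comm]

lemma card_box {μ : ℕ → ℕ} (hμ : Antitone μ) {k : ℕ} (hk : ∀ i, k ≤ i → μ i = 0)
    [Fintype (Box μ)] : Fintype.card (Box μ) = ∑ i ∈ Finset.range k, μ i := by
  rw [Fintype.card_eq_sum_ones, sum_box hμ hk]
  apply Finset.sum_congr rfl
  intro i _
  rw [sum_row_dite hμ (fun _ => 1)]
  simp

lemma cnt_eq_sum_colA {μ : ℕ → ℕ} (hμ : Antitone μ) {k : ℕ} (hk : ∀ i, k ≤ i → μ i = 0)
    [Fintype (Box μ)] (t : Box μ → ℕ) (x : ℕ) :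
    cnt μ t x = ∑ j ∈ Finset.range (μ 0), colA μ k t j x := by
  classical
  unfold cnt colA
  rw [Finset.card_filter, sum_box hμ hk, Finset.sum_comm]
  apply Finset.sum_congr rfl
  intro j _
  rw [Finset.card_filter]
  apply Finset.sum_congr rfl
  intro i _
  by_cases h : j < μ i <;> simp [h]

/-- Prefix sums of the weight count the boxes with small entries. -/
lemma sum_familyWeight {μ : ℕ → ℕ} (hμ : Antitone μ) {k : ℕ} (hk : ∀ i, k ≤ i → μ i = 0)
    [Fintype (Box μ)] {S : Finset (Box μ → ℕ)} (hS : ∀ t ∈ S, ConjSemistandard μ t) (x : ℕ) :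
    ∑ e ∈ Finset.Icc 1 x, familyWeight μ k S e = ∑ t ∈ S, cnt μ t x := by
  unfold familyWeight
  rw [Finset.sum_comm]
  apply Finset.sum_congr rfl
  intro t ht
  simp only [entryCount_eq hμ hk]
  rw [Finset.sum_comm, cnt, Finset.card_filter]
  apply Finset.sum_congr rfl
  intro b _
  have := (hS t ht).1 b
  rw [Finset.sum_ite_eq]
  simp [this]

/-! ### Reflecting the entries `d + 1`, `d + 2` of one column -/

open Classical in
/-- Redistribute the entries `d + 1` and `d + 2` in column `j` of `t`: such a box receives
`d + 1` if it lies above row `q` and `d + 2` otherwise. -/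
noncomputable def recol (μ : ℕ → ℕ) (t : Box μ → ℕ) (j d q : ℕ) : Box μ → ℕ := fun b =>
  if b.1.2 = j ∧ d < t b ∧ t b ≤ d + 2 then (if b.1.1 < q then d + 1 else d + 2) else t b

/-- The lower end of the range of `q` for which `recol μ t j d q` is conjugate-semistandard with
exactly `q` entries at most `d + 1` in column `j`. -/
noncomputable def lo (μ : ℕ → ℕ) (k : ℕ) (t : Box μ → ℕ) (j d : ℕ) : ℕ :=
  max (colA μ k t j d) (colA μ k t (j + 1) (d + 2))

/-- The upper end of the range of `q` for which `recol μ t j d q` is conjugate-semistandard with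
exactly `q` entries at most `d + 1` in column `j`; column `0` has no constraint from the left. -/
noncomputable def hi (μ : ℕ → ℕ) (k : ℕ) (t : Box μ → ℕ) : ℕ → ℕ → ℕ
  | 0, d => colA μ k t 0 (d + 2)
  | j + 1, d => min (colA μ k t (j + 1) (d + 2)) (colA μ k t j d)

lemma colA_mono {μ : ℕ → ℕ} (hμ : Antitone μ) {k : ℕ} (hk : ∀ i, k ≤ i → μ i = 0)
    {t : Box μ → ℕ} (ht : ConjSemistandard μ t)
    (j : ℕ) {x y : ℕ} (hxy : x ≤ y) : colA μ k t j x ≤ colA μ k t j y := by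
  refine le_of_forall_lt fun i hi => ?_
  rw [lt_colA_iff hμ hk ht] at hi ⊢
  obtain ⟨h, hx⟩ := hi
  exact ⟨h, hx.trans hxy⟩

lemma colA_succ_le {μ : ℕ → ℕ} (hμ : Antitone μ) {k : ℕ} (hk : ∀ i, k ≤ i → μ i = 0)
    {t : Box μ → ℕ} (ht : ConjSemistandard μ t)
    (j x : ℕ) : colA μ k t (j + 1) (x + 1) ≤ colA μ k t j x := by
  refine le_of_forall_lt fun i hi => ?_
  rw [lt_colA_iff hμ hk ht] at hi ⊢
  obtain ⟨h, hx⟩ := hi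
  have h' : j < μ i := by omega
  have := ht.2.1 i j (j + 1) h' h (by omega)
  exact ⟨h', by omega⟩

lemma lo_le {μ : ℕ → ℕ} (hμ : Antitone μ) {k : ℕ} (hk : ∀ i, k ≤ i → μ i = 0)
    {t : Box μ → ℕ} (ht : ConjSemistandard μ t)
    (j d : ℕ) : lo μ k t j d ≤ colA μ k t j (d + 1) :=
  max_le (colA_mono hμ hk ht j (by omega)) (colA_succ_le hμ hk ht j (d + 1))

lemma le_hi {μ : ℕ → ℕ} (hμ : Antitone μ) {k : ℕ} (hk : ∀ i, k ≤ i → μ i = 0)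
    {t : Box μ → ℕ} (ht : ConjSemistandard μ t)
    (j d : ℕ) : colA μ k t j (d + 1) ≤ hi μ k t j d := by
  cases j with
  | zero => exact colA_mono hμ hk ht 0 (by omega)
  | succ j => exact le_min (colA_mono hμ hk ht _ (by omega)) (colA_succ_le hμ hk ht j d)

lemma hi_le {μ : ℕ → ℕ} {k : ℕ} {t : Box μ → ℕ}
    (j d : ℕ) : hi μ k t j d ≤ colA μ k t j (d + 2) := by
  cases j with
  | zero => exact le_rfl
  | succ j => exact min_le_left _ _

lemma recol_css {μ : ℕ → ℕ} (hμ : Antitone μ) {k : ℕ} (hk : ∀ i, k ≤ i → μ i = 0)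
    {t : Box μ → ℕ} (ht : ConjSemistandard μ t)
    {j d q : ℕ} (hlo : lo μ k t j d ≤ q) (hhi : q ≤ hi μ k t j d) :
    ConjSemistandard μ (recol μ t j d q) := by
  refine ⟨fun b => ?_, fun i a b ha hb hab => ?_, fun i i' a h h' hi => ?_⟩
  · have := ht.1 b
    unfold recol
    split_ifs <;> omega
  · have hlt := ht.2.1 i a b ha hb hab
    unfold recol
    by_cases h1 : a = j
    · have h2 : b ≠ j := by omega
      subst h1
      simp only [h2, false_and, if_false, true_and]
      split_ifs with h3 h4
      · omega
      ·
        -- row `i` lies below the entries `≤ d + 2` of the next column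
        have h5 : ¬ i < colA μ k t (a + 1) (d + 2) := by
          have := le_max_right (colA μ k t a d) (colA μ k t (a + 1) (d + 2))
          unfold lo at hlo
          omega
        rw [lt_colA_iff hμ hk ht] at h5
        have h6 : a + 1 < μ i := by omega
        have h7 : ¬ t ⟨(i, a + 1), h6⟩ ≤ d + 2 := fun h => h5 ⟨h6, h⟩
        rcases eq_or_lt_of_le (show a + 1 ≤ b by omega) with rfl | h8
        · omega
        · have := ht.2.1 i (a + 1) b h6 hb h8
          omega
      · exact hlt
    · simp only [h1, false_and, if_false]
      by_cases h2 : b = j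
      · subst h2
        simp only [true_and]
        split_ifs with h3 h4
        · obtain ⟨c, rfl⟩ : ∃ c, b = c + 1 := ⟨b - 1, by omega⟩
          have h5 : i < colA μ k t c d := by
            have := min_le_right (colA μ k t (c + 1) (d + 2)) (colA μ k t c d)
            simp only [hi] at hhi
            omega
          rw [lt_colA_iff hμ hk ht] at h5
          obtain ⟨h6, h7⟩ := h5
          rcases eq_or_lt_of_le (show a ≤ c by omega) with rfl | h8
          · omega
          · have := ht.2.1 i a c ha h6 h8
            omega
        · omega
        · exact hlt
      · simp only [h2, false_and, if_false]
        exact hlt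
  · have := ht.2.2 i i' a h h' hi
    unfold recol
    dsimp only
    split_ifs <;> omega

lemma colA_recol_of_ne {μ : ℕ → ℕ} {k : ℕ} {t : Box μ → ℕ}
    {j j' d q x : ℕ} (h : j' ≠ j) :
    colA μ k (recol μ t j d q) j' x = colA μ k t j' x := by
  simp [colA, recol, h]

lemma recol_le_iff_lo {μ : ℕ → ℕ} {t : Box μ → ℕ}
    {j d q : ℕ} (b : Box μ) : recol μ t j d q b ≤ d ↔ t b ≤ d := by
  unfold recol
  split_ifs <;> omega

lemma recol_le_iff_hi {μ : ℕ → ℕ} {t : Box μ → ℕ}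
    {j d q : ℕ} (b : Box μ) : recol μ t j d q b ≤ d + 2 ↔ t b ≤ d + 2 := by
  unfold recol
  split_ifs <;> omega

lemma colA_recol_lo {μ : ℕ → ℕ} {k : ℕ} {t : Box μ → ℕ}
    {j j' d q : ℕ} : colA μ k (recol μ t j d q) j' d = colA μ k t j' d := by
  simp only [colA, recol_le_iff_lo]

lemma colA_recol_hi {μ : ℕ → ℕ} {k : ℕ} {t : Box μ → ℕ}
    {j j' d q : ℕ} :
    colA μ k (recol μ t j d q) j' (d + 2) = colA μ k t j' (d + 2) := by
  simp only [colA, recol_le_iff_hi]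

lemma lo_recol {μ : ℕ → ℕ} {k : ℕ} {t : Box μ → ℕ}
    {j d q : ℕ} : lo μ k (recol μ t j d q) j d = lo μ k t j d := by
  simp only [lo, colA_recol_lo, colA_recol_hi]

lemma hi_recol {μ : ℕ → ℕ} {k : ℕ} {t : Box μ → ℕ}
    {j d q : ℕ} : hi μ k (recol μ t j d q) j d = hi μ k t j d := by
  cases j <;> simp only [hi, colA_recol_lo, colA_recol_hi]

lemma colA_recol_mid {μ : ℕ → ℕ} (hμ : Antitone μ) {k : ℕ} (hk : ∀ i, k ≤ i → μ i = 0)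
    {t : Box μ → ℕ} (ht : ConjSemistandard μ t)
    {j d q : ℕ} (hlo : lo μ k t j d ≤ q) (hhi : q ≤ hi μ k t j d) :
    colA μ k (recol μ t j d q) j (d + 1) = q := by
  have hc := recol_css hμ hk ht hlo hhi
  have key : ∀ i, i < colA μ k (recol μ t j d q) j (d + 1) ↔ i < q := by
    intro i
    rw [lt_colA_iff hμ hk hc]
    constructor
    · rintro ⟨h, hx⟩
      by_cases h1 : t ⟨(i, j), h⟩ ≤ d
      · have := (lt_colA_iff hμ hk ht i j d).mpr ⟨h, h1⟩
        have h2 : colA μ k t j d ≤ lo μ k t j d := le_max_left _ _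
        omega
      · unfold recol at hx
        dsimp only at hx
        split_ifs at hx with h2 h3
        · exact h3
        · omega
        · omega
    · intro hi
      have h1 : i < colA μ k t j (d + 2) := by
        have := hi_le (k := k) (t := t) j d
        omega
      obtain ⟨h, hx⟩ := (lt_colA_iff hμ hk ht _ _ _).mp h1
      refine ⟨h, ?_⟩
      unfold recol
      dsimp only
      split_ifs <;> omega
  exact le_antisymm (le_of_forall_lt fun i h => (key i).mp h)
    (le_of_forall_lt fun i h => (key i).mpr h)

lemma recol_recol {μ : ℕ → ℕ} (hμ : Antitone μ) {k : ℕ} (hk : ∀ i, k ≤ i → μ i = 0)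
    {t : Box μ → ℕ} (ht : ConjSemistandard μ t)
    {j d q : ℕ} :
    recol μ (recol μ t j d q) j d (colA μ k t j (d + 1)) = t := by
  funext b
  obtain ⟨⟨i, a⟩, hb⟩ := b
  by_cases hj : a = j
  · subst hj
    have := lt_colA_iff hμ hk ht i a (d + 1)
    simp only [hb, exists_true_left] at this
    unfold recol
    simp only [true_and, this]
    split_ifs <;> omega
  · simp [recol, hj]

lemma recol_maj {μ : ℕ → ℕ} (hμ : Antitone μ) {k : ℕ} (hk : ∀ i, k ≤ i → μ i = 0)
    {t : Box μ → ℕ} (ht : ConjSemistandard μ t)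
    {j d q : ℕ} (hq : colA μ k t j (d + 1) ≤ q) :
    Maj μ (recol μ t j d q) t := by
  rintro ⟨⟨i, a⟩, hb⟩
  by_cases hj : a = j
  · subst hj
    have := lt_colA_iff hμ hk ht i a (d + 1)
    simp only [hb, exists_true_left] at this
    unfold recol
    simp only [true_and]
    split_ifs <;> omega
  · simp [recol, hj]

/-- The one-column Bender–Knuth reflection of `t`. -/
noncomputable def bk (μ : ℕ → ℕ) (k : ℕ) (j d : ℕ) (t : Box μ → ℕ) : Box μ → ℕ :=
  recol μ t j d (lo μ k t j d + hi μ k t j d - colA μ k t j (d + 1))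

/-- The excess of `d + 1`s over `d + 2`s among the entries in column `j` which can be changed
with all other columns fixed. -/
noncomputable def excess (μ : ℕ → ℕ) (k : ℕ) (j d : ℕ) (t : Box μ → ℕ) : ℤ :=
  2 * colA μ k t j (d + 1) - lo μ k t j d - hi μ k t j d

lemma bk_css {μ : ℕ → ℕ} (hμ : Antitone μ) {k : ℕ} (hk : ∀ i, k ≤ i → μ i = 0)
    {t : Box μ → ℕ} (ht : ConjSemistandard μ t) (j d : ℕ) :
    ConjSemistandard μ (bk μ k j d t) := by
  have h1 := lo_le hμ hk ht j d
  have h2 := le_hi hμ hk ht j d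
  exact recol_css hμ hk ht (by omega) (by omega)

lemma excess_bk {μ : ℕ → ℕ} (hμ : Antitone μ) {k : ℕ} (hk : ∀ i, k ≤ i → μ i = 0)
    {t : Box μ → ℕ} (ht : ConjSemistandard μ t) (j d : ℕ) :
    excess μ k j d (bk μ k j d t) = - excess μ k j d t := by
  have h1 := lo_le hμ hk ht j d
  have h2 := le_hi hμ hk ht j d
  unfold excess bk
  rw [lo_recol, hi_recol, colA_recol_mid hμ hk ht (by omega) (by omega)]
  omega

lemma bk_bk {μ : ℕ → ℕ} (hμ : Antitone μ) {k : ℕ} (hk : ∀ i, k ≤ i → μ i = 0)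
    {t : Box μ → ℕ} (ht : ConjSemistandard μ t) (j d : ℕ) :
    bk μ k j d (bk μ k j d t) = t := by
  have h1 := lo_le hμ hk ht j d
  have h2 := le_hi hμ hk ht j d
  conv_lhs => unfold bk
  rw [lo_recol, hi_recol, colA_recol_mid hμ hk ht (by omega) (by omega)]
  convert recol_recol hμ hk ht using 2
  omega

/-- In a closed family the reflection sends members of negative excess to members of the opposite
excess, so the excesses add up to something nonnegative. -/
lemma sum_excess_nonneg {μ : ℕ → ℕ} (hμ : Antitone μ) {k : ℕ} (hk : ∀ i, k ≤ i → μ i = 0)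
    {S : Finset (Box μ → ℕ)} (hS : ∀ t ∈ S, ConjSemistandard μ t)
    (hcl : ClosedFamily μ S) (j d : ℕ) : 0 ≤ ∑ t ∈ S, excess μ k j d t := by
  classical
  set f := excess μ k j d
  set N := S.filter fun t => f t < 0
  set Q := S.filter fun t => ¬ f t < 0
  have hN : ∀ t ∈ N, ConjSemistandard μ t := fun t h => hS t (Finset.mem_filter.mp h).1
  have hsub : N.image (bk μ k j d) ⊆ Q := by
    intro s hs
    obtain ⟨t, htN, rfl⟩ := Finset.mem_image.mp hs
    obtain ⟨htS, hneg⟩ := Finset.mem_filter.mp htN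
    have ht := hS t htS
    refine Finset.mem_filter.mpr ⟨hcl t htS _ (bk_css hμ hk ht j d) ?_, ?_⟩
    · apply recol_maj hμ hk ht
      simp only [f, excess] at hneg
      omega
    · simp only [f, excess_bk hμ hk ht]
      simp only [f] at hneg
      omega
  have h1 : ∑ s ∈ N.image (bk μ k j d), f s = - ∑ t ∈ N, f t := by
    rw [Finset.sum_image, ← Finset.sum_neg_distrib]
    · exact Finset.sum_congr rfl fun t h => excess_bk hμ hk (hN t h) j d
    · intro a ha b hb hab
      rw [← bk_bk hμ hk (hN a ha) j d, hab, bk_bk hμ hk (hN b hb)]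
  have h2 : ∑ s ∈ N.image (bk μ k j d), f s ≤ ∑ s ∈ Q, f s := by
    apply Finset.sum_le_sum_of_subset_of_nonneg hsub
    intro s hs _
    have := (Finset.mem_filter.mp hs).2
    omega
  have h3 : ∑ t ∈ N, f t + ∑ t ∈ Q, f t = ∑ t ∈ S, f t :=
    Finset.sum_filter_add_sum_filter_not S _ f
  omega

/-- The bounds `hi (j + 1)` and `lo j` are the minimum and maximum of the same two numbers. -/
lemma sum_lo_hi {μ : ℕ → ℕ} {k : ℕ}
    (t : Box μ → ℕ) (d M : ℕ) :
    ∑ j ∈ Finset.range M, (lo μ k t j d + hi μ k t j d) + hi μ k t M d =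
      ∑ j ∈ Finset.range M, (colA μ k t j d + colA μ k t j (d + 2)) + colA μ k t M (d + 2) := by
  induction M with
  | zero => simp [hi]
  | succ M ih =>
    rw [Finset.sum_range_succ, Finset.sum_range_succ]
    have : lo μ k t M d + hi μ k t (M + 1) d = colA μ k t M d + colA μ k t (M + 1) (d + 2) := by
      simp only [lo, hi]
      omega
    omega

lemma sum_excess {μ : ℕ → ℕ} (hμ : Antitone μ) {k : ℕ} (hk : ∀ i, k ≤ i → μ i = 0)
    [Fintype (Box μ)] {t : Box μ → ℕ} (ht : ConjSemistandard μ t) (d : ℕ) :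
    ∑ j ∈ Finset.range (μ 0), excess μ k j d t =
      2 * (cnt μ t (d + 1) : ℤ) - cnt μ t d - cnt μ t (d + 2) := by
  have h0 : colA μ k t (μ 0) (d + 2) = 0 := by
    by_contra h
    obtain ⟨h1, -⟩ := (lt_colA_iff hμ hk ht 0 (μ 0) (d + 2)).mp (by omega)
    omega
  have h1 : hi μ k t (μ 0) d = 0 := by
    have := hi_le (k := k) (t := t) (μ 0) d
    omega
  have h2 := sum_lo_hi (k := k) t d (μ 0)
  rw [h0, h1, Finset.sum_add_distrib, Finset.sum_add_distrib, ← cnt_eq_sum_colA hμ hk,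
    ← cnt_eq_sum_colA hμ hk] at h2
  rw [cnt_eq_sum_colA hμ hk t (d + 1)]
  simp only [excess, Finset.sum_sub_distrib, ← Finset.mul_sum]
  push_cast
  zify at h2
  linarith

/-- The weight of a closed family is weakly decreasing. -/
lemma weaklyDecr_of_closed {μ : ℕ → ℕ} (hμ : Antitone μ) {k : ℕ} (hk : ∀ i, k ≤ i → μ i = 0)
    [Fintype (Box μ)] {S : Finset (Box μ → ℕ)}
    (hS : ∀ t ∈ S, ConjSemistandard μ t) (hcl : ClosedFamily μ S) :
    WeaklyDecr (familyWeight μ k S) := by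
  intro j hj
  obtain ⟨d, rfl⟩ : ∃ d, j = d + 1 := ⟨j - 1, by omega⟩
  have h1 : 0 ≤ ∑ t ∈ S, ∑ j ∈ Finset.range (μ 0), excess μ k j d t := by
    rw [Finset.sum_comm]
    exact Finset.sum_nonneg fun j _ => sum_excess_nonneg hμ hk hS hcl j d
  rw [Finset.sum_congr rfl fun t ht => sum_excess hμ hk (hS t ht) d] at h1
  rw [Finset.sum_sub_distrib, Finset.sum_sub_distrib, ← Finset.mul_sum] at h1
  have h2 := sum_familyWeight hμ hk hS (d + 1)
  have h3 := sum_familyWeight hμ hk hS (d + 2)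
  rw [Finset.sum_Icc_succ_top (by omega)] at h2 h3
  rw [Finset.sum_Icc_succ_top (by omega)] at h3
  rw [sum_familyWeight hμ hk hS] at h2 h3
  zify at h2 h3
  rw [← h2, ← h3] at h1
  show familyWeight μ k S (d + 1 + 1) ≤ _
  zify
  linarith

/-! ### Conjugation and dominance -/

lemma sum_conjOf (w : ℕ → ℕ) (N s : ℕ) :
    ∑ i ∈ Finset.Icc 1 s, conjOf w N i = ∑ j ∈ Finset.Icc 1 N, min (w j) s := by
  simp only [conjOf, Finset.card_filter]
  rw [Finset.sum_comm]
  apply Finset.sum_congr rfl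
  intro j _
  rw [← Finset.card_filter]
  have : (Finset.Icc 1 s).filter (fun i => i ≤ w j) = Finset.Icc 1 (min (w j) s) := by
    ext i
    simp only [Finset.mem_filter, Finset.mem_Icc]
    omega
  rw [this, Nat.card_Icc]
  omega

lemma WeaklyDecr.le {w : ℕ → ℕ} (hw : WeaklyDecr w) {i j : ℕ} (hi : 1 ≤ i) (hij : i ≤ j) :
    w j ≤ w i := by
  induction j, hij using Nat.le_induction with
  | base => exact le_rfl
  | succ j hj ih => exact (hw j (by omega)).trans ih

lemma le_conjOf_iff {w : ℕ → ℕ} (hw : WeaklyDecr w) {N i j : ℕ} (hj : 1 ≤ j) (hjN : j ≤ N) :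
    j ≤ conjOf w N i ↔ i ≤ w j := by
  unfold conjOf
  constructor
  · intro h
    by_contra hlt
    have : ((Finset.Icc 1 N).filter fun j => i ≤ w j) ⊆ Finset.Icc 1 (j - 1) := by
      intro a ha
      simp only [Finset.mem_filter, Finset.mem_Icc] at ha ⊢
      refine ⟨ha.1.1, ?_⟩
      by_contra hc
      have := hw.le hj (show j ≤ a by omega)
      omega
    have := Finset.card_le_card this
    rw [Nat.card_Icc] at this
    omega
  · intro h
    have : Finset.Icc 1 j ⊆ ((Finset.Icc 1 N).filter fun j => i ≤ w j) := by
      intro a ha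
      simp only [Finset.mem_filter, Finset.mem_Icc] at ha ⊢
      have := hw.le ha.1 ha.2
      omega
    have := Finset.card_le_card this
    rw [Nat.card_Icc] at this
    omega

/-- If `w` is weakly decreasing and the prefix sums of `w'` are at least those of `w`, with the
same total, then conjugation reverses the comparison. -/
lemma domLE_conjOf {w w' : ℕ → ℕ} (hw : WeaklyDecr w) {N : ℕ}
    (hle : ∀ x, ∑ j ∈ Finset.Icc 1 x, w j ≤ ∑ j ∈ Finset.Icc 1 x, w' j)
    (heq : ∑ j ∈ Finset.Icc 1 N, w j = ∑ j ∈ Finset.Icc 1 N, w' j) :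
    DomLE (conjOf w' N) (conjOf w N) := by
  intro s
  rw [sum_conjOf, sum_conjOf]
  -- the parts of `w` exceeding `s` are the first `J`
  set J := conjOf w N (s + 1) with hJ
  have hJN : J ≤ N := by
    have := Finset.card_filter_le (Finset.Icc 1 N) (fun j => s + 1 ≤ w j)
    rw [Nat.card_Icc] at this
    simp only [hJ, conjOf]
    omega
  have split : ∀ g : ℕ → ℕ, ∑ j ∈ Finset.Icc 1 N, g j =
      ∑ j ∈ Finset.Icc 1 J, g j + ∑ j ∈ Finset.Ioc J N, g j := by
    intro g
    rw [← Finset.sum_union]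
    · congr 1
      ext a
      simp only [Finset.mem_union, Finset.mem_Icc, Finset.mem_Ioc]
      omega
    · rw [Finset.disjoint_left]
      intro a
      simp only [Finset.mem_Icc, Finset.mem_Ioc]
      omega
  have h1 : ∑ j ∈ Finset.Icc 1 J, min (w j) s = ∑ j ∈ Finset.Icc 1 J, s := by
    apply Finset.sum_congr rfl
    intro j hj
    rw [Finset.mem_Icc] at hj
    have := (le_conjOf_iff hw hj.1 (hj.2.trans hJN)).mp hj.2
    omega
  have h2 : ∑ j ∈ Finset.Ioc J N, min (w j) s = ∑ j ∈ Finset.Ioc J N, w j := by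
    apply Finset.sum_congr rfl
    intro j hj
    rw [Finset.mem_Ioc] at hj
    have := (le_conjOf_iff (i := s + 1) hw (show 1 ≤ j by omega) hj.2).not.mp (by omega)
    omega
  have h3 : ∑ j ∈ Finset.Icc 1 J, min (w' j) s ≤ ∑ j ∈ Finset.Icc 1 J, s :=
    Finset.sum_le_sum fun j _ => min_le_right _ _
  have h4 : ∑ j ∈ Finset.Ioc J N, min (w' j) s ≤ ∑ j ∈ Finset.Ioc J N, w' j :=
    Finset.sum_le_sum fun j _ => min_le_left _ _
  have h5 := hle J
  rw [split w, split w'] at heq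
  rw [split, split, h1, h2]
  omega

/-! ### Lowering a family to a closed one -/

lemma cnt_anti {μ : ℕ → ℕ} [Fintype (Box μ)] {u v : Box μ → ℕ} (h : Maj μ u v) (x : ℕ) :
    cnt μ v x ≤ cnt μ u x := by
  apply Finset.card_le_card
  intro b hb
  simp only [Finset.mem_filter, Finset.mem_univ, true_and] at hb ⊢
  exact (h b).trans hb

/-- Replacing `v` by a smaller tableau `u` outside the family. -/
lemma sum_swap {α β : Type*} [DecidableEq α] [AddCommMonoid β] {S : Finset α} {u v : α}
    (hv : v ∈ S) (hu : u ∉ S) (f : α → β) :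
    ∑ t ∈ insert u (S.erase v), f t + f v = ∑ t ∈ S, f t + f u := by
  rw [Finset.sum_insert (fun h => hu (Finset.mem_of_mem_erase h)), ← Finset.sum_erase_add S f hv]
  ac_rfl

lemma card_swap {α : Type*} [DecidableEq α] {S : Finset α} {u v : α}
    (hv : v ∈ S) (hu : u ∉ S) : (insert u (S.erase v)).card = S.card := by
  have := sum_swap hv hu (fun _ => 1)
  simpa using this

/-- Lowering tableaux one at a time ends, because the sum of all entries drops, and it ends at a
closed family. -/
lemma exists_closed {μ : ℕ → ℕ} [Fintype (Box μ)] (S : Finset (Box μ → ℕ))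
    (hS : ∀ t ∈ S, ConjSemistandard μ t) :
    ∃ S' : Finset (Box μ → ℕ), S'.card = S.card ∧ (∀ t ∈ S', ConjSemistandard μ t) ∧
      ClosedFamily μ S' ∧ ∀ x, ∑ t ∈ S, cnt μ t x ≤ ∑ t ∈ S', cnt μ t x := by
  classical
  induction hN : ∑ t ∈ S, ∑ b, t b using Nat.strong_induction_on generalizing S with
  | _ N ih =>
    by_cases hcl : ClosedFamily μ S
    · exact ⟨S, rfl, hS, hcl, fun _ => le_rfl⟩
    unfold ClosedFamily at hcl
    push Not at hcl
    obtain ⟨v, hv, u, hu, huv, huS⟩ := hcl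
    have hne : u ≠ v := fun h => huS (h ▸ hv)
    have hlt : ∑ b, u b < ∑ b, v b := by
      obtain ⟨b, hb⟩ := Function.ne_iff.mp hne
      exact Finset.sum_lt_sum (fun b _ => huv b) ⟨b, Finset.mem_univ _, lt_of_le_of_ne (huv b) hb⟩
    have hsum := sum_swap hv huS (fun t : Box μ → ℕ => ∑ b, t b)
    obtain ⟨S', h1, h2, h3, h4⟩ := ih _ (by omega) (insert u (S.erase v)) (by
      intro t ht
      rcases Finset.mem_insert.mp ht with rfl | ht
      · exact hu
      · exact hS t (Finset.mem_of_mem_erase ht)) rfl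
    refine ⟨S', h1.trans (card_swap hv huS), h2, h3, fun x => le_trans ?_ (h4 x)⟩
    have := sum_swap hv huS (fun t => cnt μ t x)
    have := cnt_anti huv x
    omega

/-! ### Minimal families -/

/-- **Lemma 2.12 (Paget–Wildon).** Let `μ` be a partition of `m` and let `T` be a
conjugate-semistandard tableau family of shape `μ^n` whose weight is weakly decreasing, and
suppose the type of `T` (the conjugate of its weight) is minimal in the dominance order among
the types of all such families.  Then `T` is closed. -/
theorem minimal_type_family_closed
    (μ : ℕ → ℕ) (hμ : ∀ i, μ (i + 1) ≤ μ i) (k : ℕ) (hk : ∀ i, k ≤ i → μ i = 0)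
    (m : ℕ) (hm : m = ∑ i ∈ Finset.range k, μ i)
    (n : ℕ) (T : Finset (Box μ → ℕ)) (hcard : T.card = n)
    (hcss : ∀ t ∈ T, ConjSemistandard μ t)
    (hwd : WeaklyDecr (familyWeight μ k T))
    (hmin : ¬ ∃ S : Finset (Box μ → ℕ), S.card = n ∧ (∀ t ∈ S, ConjSemistandard μ t) ∧
      WeaklyDecr (familyWeight μ k S) ∧
      DomLE (conjOf (familyWeight μ k S) (m * n)) (conjOf (familyWeight μ k T) (m * n)) ∧
      ∃ i, 1 ≤ i ∧
        conjOf (familyWeight μ k S) (m * n) i ≠ conjOf (familyWeight μ k T) (m * n) i) :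
    ClosedFamily μ T := by
  classical
  have hμ' : Antitone μ := antitone_nat_of_succ_le hμ
  have hfin : Finite (Box μ) := by
    apply Set.Finite.subset (Set.Finite.prod (Set.finite_Iio k) (Set.finite_Iio (μ 0)))
    intro p (hp : p.2 < μ p.1)
    refine ⟨?_, lt_of_lt_of_le hp (hμ' (Nat.zero_le _))⟩
    by_contra hc
    rw [hk _ (not_lt.mp hc)] at hp
    omega
  have : Fintype (Box μ) := Fintype.ofFinite _
  have hm' : Fintype.card (Box μ) = m := (card_box hμ' hk).trans hm.symm
  have hmax : ∀ S : Finset (Box μ → ℕ), S.card = n → ∀ x, ∑ t ∈ S, cnt μ t x ≤ m * n := by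
    intro S hS x
    have : ∑ t ∈ S, cnt μ t x ≤ ∑ t ∈ S, m :=
      Finset.sum_le_sum fun t _ => (Finset.card_le_univ _).trans hm'.le
    rw [Finset.sum_const, hS, smul_eq_mul] at this
    linarith
  -- the entries of `T` are bounded, and `WeaklyDecr` bounds them by the total `m * n`
  have hTN : ∀ x, m * n ≤ x → ∑ t ∈ T, cnt μ t x = m * n := by
    suffices h : m * n ≤ ∑ t ∈ T, cnt μ t (m * n) by
      intro x hx
      refine le_antisymm (hmax T hcard x) (h.trans (Finset.sum_le_sum fun t _ => ?_))
      exact Finset.card_le_card (Finset.monotone_filter_right _ fun b _ hb => hb.trans hx)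
    by_contra hlt
    have hz : ∃ j ∈ Finset.Icc 1 (m * n), familyWeight μ k T j = 0 := by
      by_contra hc
      push Not at hc
      have h1 : ∑ j ∈ Finset.Icc 1 (m * n), 1 ≤
          ∑ j ∈ Finset.Icc 1 (m * n), familyWeight μ k T j :=
        Finset.sum_le_sum fun j hj => Nat.one_le_iff_ne_zero.mpr (hc j hj)
      rw [sum_familyWeight hμ' hk hcss] at h1
      simp at h1
      omega
    obtain ⟨j, hj, hj0⟩ := hz
    rw [Finset.mem_Icc] at hj
    have hbig : ∀ x, m * n ≤ x → ∑ t ∈ T, cnt μ t x = ∑ t ∈ T, cnt μ t (m * n) := by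
      intro x hx
      rw [← sum_familyWeight hμ' hk hcss, ← sum_familyWeight hμ' hk hcss]
      symm
      apply Finset.sum_subset (Finset.Icc_subset_Icc_right hx)
      intro i hi hi'
      simp only [Finset.mem_Icc] at hi hi'
      have := hwd.le hj.1 (show j ≤ i by omega)
      omega
    have hX := hbig (m * n + ∑ t ∈ T, ∑ b, t b) (by omega)
    have : ∑ t ∈ T, cnt μ t (m * n + ∑ t ∈ T, ∑ b, t b) = ∑ t ∈ T, m := by
      apply Finset.sum_congr rfl
      intro t ht
      rw [← hm', cnt, ← Finset.card_univ]
      congr 1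
      apply Finset.filter_true_of_mem
      intro b _
      have h1 : t b ≤ ∑ b, t b := Finset.single_le_sum (f := t) (by simp) (Finset.mem_univ b)
      have h2 : ∑ b, t b ≤ ∑ t ∈ T, ∑ b, t b :=
        Finset.single_le_sum (f := fun t : Box μ → ℕ => ∑ b, t b) (by simp) ht
      omega
    rw [Finset.sum_const, hcard, smul_eq_mul, mul_comm n m] at this
    omega
  intro v hv u hu huv
  by_contra huT
  obtain ⟨S, hSc, hS, hScl, hSle⟩ := exists_closed (insert u (T.erase v)) (by
      intro t ht
      rcases Finset.mem_insert.mp ht with rfl | ht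
      · exact hu
      · exact hcss t (Finset.mem_of_mem_erase ht))
  rw [card_swap hv huT, hcard] at hSc
  have hSwd := weaklyDecr_of_closed hμ' hk hS hScl
  have hle : ∀ x, ∑ t ∈ T, cnt μ t x ≤ ∑ t ∈ S, cnt μ t x := by
    intro x
    have h1 := sum_swap hv huT (fun t => cnt μ t x)
    have h2 := cnt_anti huv x
    have h3 := hSle x
    omega
  have hSN : ∀ x, m * n ≤ x → ∑ t ∈ S, cnt μ t x = m * n := fun x hx =>
    le_antisymm (hmax S hSc x) ((hTN x hx).symm.le.trans (hle x))
  have hconj : ∀ i, 1 ≤ i → conjOf (familyWeight μ k S) (m * n) i =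
      conjOf (familyWeight μ k T) (m * n) i := by
    by_contra hc
    push Not at hc
    refine hmin ⟨S, hSc, hS, hSwd, domLE_conjOf hwd ?_ ?_, hc⟩
    · intro x
      rw [sum_familyWeight hμ' hk hcss, sum_familyWeight hμ' hk hS]
      exact hle x
    · rw [sum_familyWeight hμ' hk hcss, sum_familyWeight hμ' hk hS, hTN _ le_rfl, hSN _ le_rfl]
  have hweq : ∀ j, 1 ≤ j → j ≤ m * n → familyWeight μ k S j ≤ familyWeight μ k T j := by
    intro j hj hjN
    rcases Nat.eq_zero_or_pos (familyWeight μ k S j) with h0 | hpos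
    · omega
    · rw [← le_conjOf_iff hwd hj hjN, ← hconj _ hpos, le_conjOf_iff hSwd hj hjN]
  have hge : ∀ x, ∑ t ∈ S, cnt μ t x ≤ ∑ t ∈ T, cnt μ t x := by
    intro x
    rcases le_total (m * n) x with hx | hx
    · rw [hTN x hx, hSN x hx]
    · rw [← sum_familyWeight hμ' hk hcss, ← sum_familyWeight hμ' hk hS]
      apply Finset.sum_le_sum
      intro j hj
      rw [Finset.mem_Icc] at hj
      exact hweq j hj.1 (hj.2.trans hx)
  obtain ⟨b, hb⟩ := Function.ne_iff.mp (show u ≠ v from fun h => huT (h ▸ hv))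
  have hb' : u b < v b := lt_of_le_of_ne (huv b) hb
  have hstrict : cnt μ v (u b) < cnt μ u (u b) := by
    apply Finset.card_lt_card
    rw [Finset.ssubset_iff_of_subset]
    · exact ⟨b, by simp, by simpa using hb'⟩
    · intro c hc
      simp only [Finset.mem_filter, Finset.mem_univ, true_and] at hc ⊢
      exact (huv c).trans hc
  have h1 := sum_swap hv huT (fun t => cnt μ t (u b))
  have h2 := hSle (u b)
  have h3 := hge (u b)
  omega
end

section
/- Let μ be a partition of m ≥ 1 and ν a partition of n ≥ 1, and let Ω be a set. Let T assign to each box p ∈ [ν] an injective μ-tableau T(p) : [μ] → Ω such that the sets of entries of T(p), for distinct boxes p of [ν], are pairwise disjoint. For a permutation ρ of [ν] and a family π = (π_p)_{p ∈ [ν]} of permutations of [μ], let (T·ρ)⋆π denote the assignment p ↦ (T(ρ⁻¹(p)))·π_p. If ρ, ρ′ ∈ RPP(ν), π_p, π′_p ∈ CPP(μ) for all p ∈ [ν], and (T·ρ)⋆π = (T·ρ′)⋆π′ as functions from [ν] to μ-tableaux, then ρ = ρ′ and π_p = π′_p for every p ∈ [ν]. -/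
/-- The group of column place permutations: permutations of the boxes mapping every box to a box
in the same column. -/
def CPP (μ : ℕ → ℕ) (σ : Equiv.Perm (Box μ)) : Prop :=
  ∀ b, ((σ b : ℕ × ℕ)).2 = ((b : ℕ × ℕ)).2

/-- **Lemma 5.2 (Paget–Wildon).** Let `μ` be a partition of `m ≥ 1`, `ν` a partition of `n ≥ 1`,
and `Ω` a set.  Let `T` assign to each box `p ∈ [ν]` an injective `μ`-tableau `T(p)` with entries
in `Ω`, the sets of entries of the `T(p)` being pairwise disjoint.  If `ρ, ρ' ∈ RPP(ν)` and
`π_p, π'_p ∈ CPP(μ)` for all `p ∈ [ν]`, and `(T·ρ)⋆π = (T·ρ')⋆π'` (where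
`((T·ρ)⋆π)(p) = T(ρ⁻¹ p)·π_p` and `(t·σ)(b) = t(σ⁻¹ b)`), then `ρ = ρ'` and `π_p = π'_p`
for every `p`. -/
theorem rho_pi_unique
    (μ : ℕ → ℕ) (hμ : ∀ i, μ (i + 1) ≤ μ i) (m : ℕ) (hm1 : 1 ≤ m)
    (kμ : ℕ) (hkμ : ∀ i, kμ ≤ i → μ i = 0) (hmsum : m = ∑ i ∈ Finset.range kμ, μ i)
    (ν : ℕ → ℕ) (hν : ∀ i, ν (i + 1) ≤ ν i) (n : ℕ) (hn1 : 1 ≤ n)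
    (kν : ℕ) (hkν : ∀ i, kν ≤ i → ν i = 0) (hnsum : n = ∑ i ∈ Finset.range kν, ν i)
    {Ω : Type*} (T : Box ν → Box μ → Ω)
    (hinj : ∀ p, Function.Injective (T p))
    (hdisj : ∀ p q : Box ν, p ≠ q → ∀ b b' : Box μ, T p b ≠ T q b')
    (ρ ρ' : Equiv.Perm (Box ν)) (hρ : RPP ν ρ) (hρ' : RPP ν ρ')
    (π π' : Box ν → Equiv.Perm (Box μ))
    (hπ : ∀ p, CPP μ (π p)) (hπ' : ∀ p, CPP μ (π' p))
    (heq : ∀ p b, T (ρ⁻¹ p) ((π p)⁻¹ b) = T (ρ'⁻¹ p) ((π' p)⁻¹ b)) :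
    ρ = ρ' ∧ ∀ p, π p = π' p := by
  obtain ⟨b₀⟩ : Nonempty (Box μ) := by
    -- `m ≥ 1` forces some row of `μ` to be nonempty.
    by_contra hempty
    have hzero : ∀ i, μ i = 0 := fun i => by
      by_contra hi
      exact hempty ⟨⟨(i, 0), Nat.pos_of_ne_zero hi⟩⟩
    simp [hzero] at hmsum
    omega
  have hinv : ∀ p, ρ⁻¹ p = ρ'⁻¹ p := fun p => by
    by_contra hne
    exact hdisj _ _ hne _ _ (heq p b₀)
  refine ⟨inv_injective (Equiv.ext hinv), fun p => inv_injective (Equiv.ext fun b => ?_)⟩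
  have h := heq p b
  rw [hinv p] at h
  exact hinj _ h
end

section
/- Let μ be a partition and let t_1,…,t_n be conjugate-semistandard μ-tableaux, and let σ_1,…,σ_n ∈ RPP(μ). If the multiset of columnar tabloids {‖t_1·σ_1‖, …, ‖t_n·σ_n‖} equals the multiset {‖t_1‖, …, ‖t_n‖}, then σ_i is the identity permutation for every i ∈ {1,…,n}. -/
/-- The columnar tabloid `‖t‖` of a tableau `t`: the function recording, for each column index
`j`, the multiset of entries of `t` in column `j`. -/
def colTabloid (μ : ℕ → ℕ) (k : ℕ) {Ω : Type*} (t : Box μ → Ω) : ℕ → Multiset Ω :=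
  fun j => colM μ k t j

/-- The total of the entries in each column, weighted by the (zero-based) column index; only the
columns with index below `m` are counted. -/
def tabloidWeight (m : ℕ) (T : ℕ → Multiset ℕ) : ℕ :=
  ∑ j ∈ Finset.range m, j * (T j).sum

/-- The contribution of row `i` of `t` to the weight of its columnar tabloid. -/
def rowSum (μ : ℕ → ℕ) (t : Box μ → ℕ) (i : ℕ) : ℕ :=
  ∑ j : Fin (μ i), (j : ℕ) * t ⟨(i, j), j.2⟩

lemma colTabloid_sum (μ : ℕ → ℕ) (k : ℕ) (t : Box μ → ℕ) (j : ℕ) :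
    (colTabloid μ k t j).sum =
      ∑ i ∈ Finset.range k, if h : j < μ i then t ⟨(i, j), h⟩ else 0 := by
  have h1 : (colTabloid μ k t j).sum = ∑ i ∈ ((Finset.range k).filter fun i => j < μ i).attach,
      t ⟨(i.1, j), (Finset.mem_filter.mp i.2).2⟩ := rfl
  rw [h1, ← Finset.sum_filter_add_sum_filter_not (Finset.range k) (fun i => j < μ i),
    Finset.sum_eq_zero (s := (Finset.range k).filter fun i => ¬ j < μ i), add_zero,
    ← Finset.sum_attach ((Finset.range k).filter fun i => j < μ i)]
  · refine Finset.sum_congr rfl fun i _ => ?_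
    rw [dif_pos (Finset.mem_filter.mp i.2).2]
  · intro i hi
    rw [dif_neg (Finset.mem_filter.mp hi).2]

lemma tabloidWeight_colTabloid (μ : ℕ → ℕ) (k m : ℕ) (hm : ∀ i, μ i ≤ m) (t : Box μ → ℕ) :
    tabloidWeight m (colTabloid μ k t) = ∑ i ∈ Finset.range k, rowSum μ t i := by
  simp only [tabloidWeight, colTabloid_sum, Finset.mul_sum]
  rw [Finset.sum_comm]
  refine Finset.sum_congr rfl fun i _ => ?_
  rw [← Finset.sum_subset (Finset.range_subset_range.2 (hm i)), Finset.sum_range]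
  · simp [rowSum]
  · intro j _ hj
    rw [Finset.mem_range] at hj
    rw [dif_neg hj, mul_zero]

/-- The action of a row place permutation on the column indices of row `i`. -/
noncomputable def rowPerm (μ : ℕ → ℕ) (σ : Equiv.Perm (Box μ)) (hσ : RPP μ σ) (i : ℕ) :
    Equiv.Perm (Fin (μ i)) :=
  Equiv.ofBijective
    (fun j => ⟨(σ ⟨(i, j), j.2⟩).1.2, by
      have h := (σ ⟨(i, j), j.2⟩).2
      rwa [hσ] at h⟩)
    (Finite.injective_iff_bijective.1 fun a b hab => by
      have h : σ ⟨(i, a), a.2⟩ = σ ⟨(i, b), b.2⟩ :=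
        Subtype.ext (Prod.ext ((hσ ⟨(i, a), a.2⟩).trans (hσ ⟨(i, b), b.2⟩).symm) (Fin.mk.inj_iff.1 hab))
      simpa [Fin.ext_iff] using σ.injective h)

lemma rowPerm_spec (μ : ℕ → ℕ) (σ : Equiv.Perm (Box μ)) (hσ : RPP μ σ) (i : ℕ) (j : Fin (μ i)) :
    σ ⟨(i, j), j.2⟩ = ⟨(i, rowPerm μ σ hσ i j), (rowPerm μ σ hσ i j).2⟩ :=
  Subtype.ext (Prod.ext (hσ _) rfl)

lemma rpp_inv (μ : ℕ → ℕ) (σ : Equiv.Perm (Box μ)) (hσ : RPP μ σ) : RPP μ σ⁻¹ := fun b => by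
  have h := hσ (σ⁻¹ b)
  rw [show σ (σ⁻¹ b) = b from σ.apply_symm_apply b] at h
  exact h.symm

/-- The rearrangement inequality for the strictly increasing sequences `0, 1, …, n - 1` and `g`,
with its equality case. -/
lemma rearrange_fin {n : ℕ} (g : Fin n → ℕ) (hg : StrictMono g) (τ : Equiv.Perm (Fin n)) :
    ∑ j : Fin n, (j : ℕ) * g (τ j) ≤ ∑ j : Fin n, (j : ℕ) * g j ∧
      (∑ j : Fin n, (j : ℕ) * g (τ j) = ∑ j : Fin n, (j : ℕ) * g j → τ = 1) := by
  have hm : Monovary (fun j : Fin n => (j : ℕ)) g := fun a b hab => (hg.lt_iff_lt.1 hab).le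
  refine ⟨hm.sum_mul_comp_perm_le_sum_mul, fun heq => ?_⟩
  have hmono := hm.sum_mul_comp_perm_eq_sum_mul_iff.1 heq
  have hinv : Monotone (τ⁻¹ : Equiv.Perm (Fin n)) := by
    intro a b hab
    rcases hab.eq_or_lt with rfl | hlt
    · exact le_rfl
    · exact hmono (i := τ⁻¹ a) (j := τ⁻¹ b) (by simpa using hg hlt)
  have hid : ⇑(τ⁻¹) = id :=
    ((hinv.strictMono_of_injective (τ⁻¹).injective).range_inj strictMono_id).1
      (by rw [(τ⁻¹).surjective.range_eq, Set.range_id])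
  exact inv_eq_one.1 (Equiv.ext fun j => congrFun hid j)

lemma rowSum_placePerm (μ : ℕ → ℕ) (t : Box μ → ℕ) (σ : Equiv.Perm (Box μ)) (hσ : RPP μ σ)
    (i : ℕ) : rowSum μ (placePerm μ t σ) i =
      ∑ j : Fin (μ i), (j : ℕ) *
        t ⟨(i, rowPerm μ σ⁻¹ (rpp_inv μ σ hσ) i j), (rowPerm μ σ⁻¹ (rpp_inv μ σ hσ) i j).2⟩ := by
  refine Finset.sum_congr rfl fun j _ => ?_
  rw [placePerm, rowPerm_spec μ σ⁻¹ (rpp_inv μ σ hσ)]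

lemma row_strictMono {μ : ℕ → ℕ} {t : Box μ → ℕ} (ht : ConjSemistandard μ t) (i : ℕ) :
    StrictMono fun j : Fin (μ i) => t ⟨(i, j), j.2⟩ :=
  fun a b hab => ht.2.1 i a b a.2 b.2 hab

lemma rowSum_placePerm_le {μ : ℕ → ℕ} {t : Box μ → ℕ} (ht : ConjSemistandard μ t)
    {σ : Equiv.Perm (Box μ)} (hσ : RPP μ σ) (i : ℕ) :
    rowSum μ (placePerm μ t σ) i ≤ rowSum μ t i := by
  rw [rowSum_placePerm μ t σ hσ]
  exact (rearrange_fin _ (row_strictMono ht i) _).1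

lemma eq_one_of_rowSum_eq {μ : ℕ → ℕ} {k : ℕ} (hk : ∀ i, k ≤ i → μ i = 0) {t : Box μ → ℕ}
    (ht : ConjSemistandard μ t) {σ : Equiv.Perm (Box μ)} (hσ : RPP μ σ)
    (h : ∀ i ∈ Finset.range k, rowSum μ (placePerm μ t σ) i = rowSum μ t i) : σ = 1 := by
  refine inv_eq_one.1 (Equiv.ext ?_)
  rintro ⟨⟨i, j⟩, hj⟩
  have hik : i < k := by
    by_contra hc
    have h0 := hk i (not_lt.1 hc)
    simp only at hj
    omega
  have h1 := h i (Finset.mem_range.2 hik)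
  rw [rowSum_placePerm μ t σ hσ] at h1
  have h2 := (rearrange_fin _ (row_strictMono ht i) _).2 h1
  have h3 := rowPerm_spec μ σ⁻¹ (rpp_inv μ σ hσ) i ⟨j, hj⟩
  rw [h2] at h3
  exact h3

/-- **Lemma 5.3 (Paget–Wildon).** Let `t₁, …, t_n` be conjugate-semistandard `μ`-tableaux and let
`σ₁, …, σ_n ∈ RPP(μ)`.  If the multiset of columnar tabloids `{‖t₁·σ₁‖, …, ‖t_n·σ_n‖}` equals
the multiset `{‖t₁‖, …, ‖t_n‖}`, then every `σᵢ` is the identity. -/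
theorem rpp_columnar_tabloid_multiset_eq
    (μ : ℕ → ℕ) (hμ : ∀ i, μ (i + 1) ≤ μ i) (k : ℕ) (hk : ∀ i, k ≤ i → μ i = 0)
    (n : ℕ) (t : Fin n → Box μ → ℕ)
    (hcss : ∀ i, ConjSemistandard μ (t i))
    (σ : Fin n → Equiv.Perm (Box μ)) (hσ : ∀ i, RPP μ (σ i))
    (h : (↑(List.ofFn fun i => colTabloid μ k (placePerm μ (t i) (σ i))) :
            Multiset (ℕ → Multiset ℕ)) =
         ↑(List.ofFn fun i => colTabloid μ k (t i))) :
    ∀ i, σ i = 1 := by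
  have hm : ∀ i, μ i ≤ μ 0 := fun i => antitone_nat_of_succ_le hμ i.zero_le
  have hsum := congrArg (fun M => (M.map (tabloidWeight (μ 0))).sum) h
  simp only [Multiset.map_coe, Multiset.sum_coe, List.map_ofFn, List.sum_ofFn,
    Function.comp_apply, tabloidWeight_colTabloid μ k _ hm] at hsum
  have hle : ∀ a, ∀ i ∈ Finset.range k,
      rowSum μ (placePerm μ (t a) (σ a)) i ≤ rowSum μ (t a) i :=
    fun a i _ => rowSum_placePerm_le (hcss a) (hσ a) i
  have heq := (Finset.sum_eq_sum_iff_of_le fun a _ => Finset.sum_le_sum (hle a)).1 hsum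
  intro a
  exact eq_one_of_rowSum_eq hk (hcss a) (hσ a)
    ((Finset.sum_eq_sum_iff_of_le (hle a)).1 (heq a (Finset.mem_univ a)))
end

section
/- Let μ be a partition of m ≥ 1 and ν a partition of n ≥ 1, and let Ω be a finite set of size mn. Let T assign to each box p ∈ [ν] a μ-tableau T(p) with entries in Ω such that the combined map [ν] × [μ] → Ω, (p, b) ↦ (T(p))(b), is a bijection. Suppose ψ is a permutation of Ω and ρ is a permutation of [ν] lying in RPP(ν) or in CPP(ν), such that (Tψ)·ρ = T, where Tψ denotes the assignment p ↦ ψ ∘ T(p) and U·ρ denotes p ↦ U(ρ⁻¹(p)). Then sgn(ψ) = 1 if m is even, and sgn(ψ) = sgn(ρ) if m is odd, where sgn(ρ) is the sign of ρ as a permutation of [ν]. -/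
/-- The boxes of a diagram with at most `k` nonempty rows, listed row by row. -/
def boxEquivSigma (μ : ℕ → ℕ) (k : ℕ) (hk : ∀ i, k ≤ i → μ i = 0) :
    Box μ ≃ (Σ i : Fin k, Fin (μ i)) where
  toFun p := ⟨⟨p.1.1, by
    by_contra h
    have h0 := hk p.1.1 (by omega)
    have := p.2
    omega⟩, ⟨p.1.2, p.2⟩⟩
  invFun x := ⟨(x.1, x.2), x.2.2⟩
  left_inv _ := rfl
  right_inv _ := rfl

/-- Acting by `ρ` on the first factor of `A × B` gives one copy of `ρ` for each element of `B`. -/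
theorem sign_eq_pow_of_intertwines {A B Ω : Type*} [Fintype A] [DecidableEq A] [Fintype B]
    [Fintype Ω] [DecidableEq Ω] (T : A → B → Ω)
    (hbij : Function.Bijective fun x : A × B => T x.1 x.2)
    (ψ : Equiv.Perm Ω) (ρ : Equiv.Perm A) (heq : ∀ p b, ψ (T (ρ⁻¹ p) b) = T p b) :
    Equiv.Perm.sign ψ = Equiv.Perm.sign ρ ^ Fintype.card B := by
  classical
  have h : Equiv.Perm.sign (Equiv.prodCongrLeft fun _ : B => ρ) = Equiv.Perm.sign ψ := by
    refine Equiv.Perm.sign_eq_sign_of_equiv _ _ (Equiv.ofBijective _ hbij) ?_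
    rintro ⟨p, b⟩
    simpa using (heq (ρ p) b).symm
  rw [← h, Equiv.Perm.sign_prodCongrLeft]
  simp

/-- **Lemma 5.4 (Paget–Wildon).** Let `μ` be a partition of `m ≥ 1`, `ν` a partition of `n ≥ 1`,
and `Ω` a set of size `mn`.  Let `T` assign to each box `p ∈ [ν]` a `μ`-tableau `T(p)` with
entries in `Ω` such that the combined map `(p, b) ↦ T(p)(b)` is a bijection onto `Ω`.
Suppose `ψ` is a permutation of `Ω` and `ρ ∈ RPP(ν)` or `ρ ∈ CPP(ν)` satisfy `(Tψ)·ρ = T`,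
i.e. `ψ(T(ρ⁻¹ p)(b)) = T(p)(b)` for all `p, b`.  Then `sgn ψ = 1` if `m` is even, and
`sgn ψ = sgn ρ` if `m` is odd. -/
theorem sign_of_index_permutation
    (μ : ℕ → ℕ) (hμ : ∀ i, μ (i + 1) ≤ μ i) (m : ℕ) (hm1 : 1 ≤ m)
    (kμ : ℕ) (hkμ : ∀ i, kμ ≤ i → μ i = 0) (hmsum : m = ∑ i ∈ Finset.range kμ, μ i)
    (ν : ℕ → ℕ) (hν : ∀ i, ν (i + 1) ≤ ν i) (n : ℕ) (hn1 : 1 ≤ n)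
    (kν : ℕ) (hkν : ∀ i, kν ≤ i → ν i = 0) (hnsum : n = ∑ i ∈ Finset.range kν, ν i)
    {Ω : Type*} [Fintype Ω] [DecidableEq Ω] (hΩ : Fintype.card Ω = m * n)
    [Fintype (Box ν)]
    (T : Box ν → Box μ → Ω)
    (hbij : Function.Bijective fun x : Box ν × Box μ => T x.1 x.2)
    (ψ : Equiv.Perm Ω) (ρ : Equiv.Perm (Box ν)) (hρ : RPP ν ρ ∨ CPP ν ρ)
    (heq : ∀ p b, ψ (T (ρ⁻¹ p) b) = T p b) :
    (Even m → Equiv.Perm.sign ψ = 1) ∧ (Odd m → Equiv.Perm.sign ψ = Equiv.Perm.sign ρ) := by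
  let _ : Fintype (Box μ) := Fintype.ofEquiv _ (boxEquivSigma μ kμ hkμ).symm
  have hcard : Fintype.card (Box μ) = m := by
    rw [Fintype.card_congr (boxEquivSigma μ kμ hkμ), hmsum, Fintype.card_sigma]
    simp [Finset.sum_range]
  have hsign := sign_eq_pow_of_intertwines T hbij ψ ρ heq
  rw [hcard] at hsign
  rcases Int.units_eq_one_or (Equiv.Perm.sign ρ) with h | h
  · simp [hsign, h]
  · rw [hsign, h]
    exact ⟨fun hm => hm.neg_one_pow, fun hm => hm.neg_one_pow⟩
end

section
/- Let μ be a partition of m ≥ 1 with exactly k parts and let n ≥ 1. Let e be the least index with μ_e > μ_{e+1} (setting μ_{k+1} = 0), so that μ_1 = … = μ_e. Let t be the conjugate-semistandard μ-tableau with t(a,b) = b for every (a,b) ∈ [μ], and for 1 ≤ c ≤ n−1 let t^{+c} be the tableau obtained from t by replacing the entry μ_e in box (e, μ_e) by μ_e + c; each t^{+c} is conjugate-semistandard. Define γ by γ_j = n·μ′_j for 1 ≤ j < μ_e, γ_{μ_e} = n·e − (n−1), γ_{μ_e + c} = 1 for 1 ≤ c ≤ n−1, and γ_j = 0 for all other j.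 Then {t, t^{+1}, …, t^{+(n−1)}} is a conjugate-semistandard tableau family of shape μ^n with weight γ; it is the unique family of shape μ^n with weight γ; and every other conjugate-semistandard tableau family of shape μ^n has weight strictly smaller than γ in the lexicographic order. -/
/-- The tableau `t` with `t(a,b) = b` (1-indexed entries; here box `(a,b)` is 0-indexed and
carries entry `b+1`). -/
def baseTab (μ : ℕ → ℕ) : Box μ → ℕ := fun b => b.1.2 + 1

/-- The rightmost box of row `e` (0-indexed), i.e. the box `(e, μ_e)` in 1-indexed notation. -/
def cornerBox (μ : ℕ → ℕ) (e : ℕ) (h : 0 < μ e) : Box μ :=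
  ⟨(e, μ e - 1), by exact Nat.sub_lt h Nat.one_pos⟩

/-- The tableau `t^{+c}`, obtained from `baseTab μ` by replacing the entry `μ_e` in the rightmost
box of row `e` by `μ_e + c`. -/
def tPlus (μ : ℕ → ℕ) (e : ℕ) (h : 0 < μ e) (c : ℕ) : Box μ → ℕ :=
  Function.update (baseTab μ) (cornerBox μ e h) (μ e + c)

/-- The weight `γ` of Proposition 8.7: `γ_j = n·μ′_j` for `1 ≤ j < μ_e`,
`γ_{μ_e} = n·(e+1) − (n−1)` (here `e` is 0-indexed, so `e+1` is the 1-indexed row number),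
`γ_{μ_e + c} = 1` for `1 ≤ c ≤ n−1`, and `γ_j = 0` otherwise.
Here `μ′_j = #{i < k : μ_i ≥ j}` is the conjugate partition. -/
def gammaMax (μ : ℕ → ℕ) (k e n : ℕ) : ℕ → ℕ := fun j =>
  if j = 0 then 0
  else if j < μ e then n * ((Finset.range k).filter fun i => j ≤ μ i).card
  else if j = μ e then n * (e + 1) - (n - 1)
  else if j ≤ μ e + (n - 1) then 1
  else 0

/-- The entry of `t` in row `i` and column `j` (zero-indexed), with value `0` outside the shape. -/
def ent (μ : ℕ → ℕ) (t : Box μ → ℕ) (i j : ℕ) : ℕ :=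
  if h : j < μ i then t ⟨(i, j), h⟩ else 0

/-- The first `j` columns of `t` agree with those of `baseTab μ`. -/
def Agree (μ : ℕ → ℕ) (t : Box μ → ℕ) (j : ℕ) : Prop :=
  ∀ i j', j' < j → j' < μ i → ent μ t i j' = j' + 1

lemma ent_of_lt {μ : ℕ → ℕ} (t : Box μ → ℕ) {i j : ℕ} (h : j < μ i) :
    ent μ t i j = t ⟨(i, j), h⟩ := dif_pos h

lemma entryCount_eq_s10 (μ : ℕ → ℕ) (k : ℕ) (t : Box μ → ℕ) (v : ℕ) :
    entryCount μ k t v =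
      ∑ i ∈ Finset.range k, ((Finset.range (μ i)).filter fun j => ent μ t i j = v).card := by
  unfold entryCount
  refine Finset.sum_congr rfl fun i _ => ?_
  have h : rowM μ t i = (Finset.range (μ i)).val.map (ent μ t i) := by
    unfold rowM
    conv_rhs => rw [← Multiset.attach_map_val (Finset.range (μ i)).val, Multiset.map_map]
    refine Multiset.map_congr rfl fun j _ => ?_
    exact (ent_of_lt t (Finset.mem_range.mp j.2)).symm
  rw [h, Multiset.count_map, Finset.card_def, Finset.filter_val]
  simp only [eq_comm]

lemma ent_lower {μ : ℕ → ℕ} {t : Box μ → ℕ} (ht : ConjSemistandard μ t) (i : ℕ) :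
    ∀ j, j < μ i → j + 1 ≤ ent μ t i j := by
  intro j
  induction j with
  | zero => intro h; rw [ent_of_lt t h]; exact ht.1 _
  | succ j ih =>
    intro h
    have h1 := ih (by omega)
    rw [ent_of_lt t (by omega : j < μ i)] at h1
    rw [ent_of_lt t h]
    have := ht.2.1 i j (j + 1) (by omega) h (by omega)
    omega

lemma entryCount_succ {μ : ℕ → ℕ} {t : Box μ → ℕ} (k : ℕ) (ht : ConjSemistandard μ t) {j : ℕ}
    (hj : Agree μ t j) :
    entryCount μ k t (j + 1) =
      ((Finset.range k).filter fun i => j < μ i ∧ ent μ t i j = j + 1).card := by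
  rw [entryCount_eq_s10, Finset.card_filter]
  refine Finset.sum_congr rfl fun i _ => ?_
  have key : ∀ a, a < μ i → ent μ t i a = j + 1 → a = j := by
    intro a ha h
    have := ent_lower ht i a ha
    by_contra hne
    have := hj i a (by omega) ha
    omega
  split_ifs with h
  · rw [Finset.card_eq_one]
    refine ⟨j, ?_⟩
    ext a
    simp only [Finset.mem_filter, Finset.mem_range, Finset.mem_singleton]
    exact ⟨fun ha => key a ha.1 ha.2, fun ha => ha ▸ h⟩
  · rw [Finset.card_eq_zero, Finset.filter_eq_empty_iff]
    intro a ha h'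
    have ha := Finset.mem_range.mp ha
    have := key a ha h'
    subst this
    exact h ⟨ha, h'⟩

lemma entryCount_le {μ : ℕ → ℕ} {t : Box μ → ℕ} (k : ℕ) (ht : ConjSemistandard μ t) {j : ℕ}
    (hj : Agree μ t j) :
    entryCount μ k t (j + 1) ≤ ((Finset.range k).filter fun i => j + 1 ≤ μ i).card := by
  rw [entryCount_succ k ht hj]
  refine Finset.card_le_card fun i => ?_
  simp only [Finset.mem_filter]
  exact fun h => ⟨h.1, h.2.1⟩

/-- If `j + 1` attains its maximal multiplicity, then column `j` (numbered from zero)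
is constant as well. -/
lemma agree_succ {μ : ℕ → ℕ} {t : Box μ → ℕ} {k : ℕ} (hk : ∀ i, k ≤ i → μ i = 0)
    (ht : ConjSemistandard μ t) {j : ℕ} (hj : Agree μ t j)
    (h : entryCount μ k t (j + 1) = ((Finset.range k).filter fun i => j + 1 ≤ μ i).card) :
    Agree μ t (j + 1) := by
  rw [entryCount_succ k ht hj] at h
  have hs : ((Finset.range k).filter fun i => j < μ i ∧ ent μ t i j = j + 1) =
      ((Finset.range k).filter fun i => j + 1 ≤ μ i) := by
    refine Finset.eq_of_subset_of_card_le (fun i => ?_) h.ge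
    simp only [Finset.mem_filter]
    exact fun h => ⟨h.1, h.2.1⟩
  intro i j' hj' hi
  rcases Nat.lt_succ_iff_lt_or_eq.mp hj' with h' | rfl
  · exact hj i j' h' hi
  · have hik : i < k := by
      by_contra hc
      have := hk i (by omega)
      omega
    have : i ∈ ((Finset.range k).filter fun i => j' + 1 ≤ μ i) := by
      simp only [Finset.mem_filter, Finset.mem_range]
      exact ⟨hik, hi⟩
    rw [← hs] at this
    exact (Finset.mem_filter.mp this).2.2

/-! ### The tableaux `t^{+c}` -/

lemma ent_tPlus {μ : ℕ → ℕ} {e : ℕ} (hpos : 0 < μ e) (c : ℕ) {i j : ℕ} (h : j < μ i) :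
    ent μ (tPlus μ e hpos c) i j = if i = e ∧ j = μ e - 1 then μ e + c else j + 1 := by
  rw [ent_of_lt _ h]
  simp [tPlus, Function.update_apply, cornerBox, baseTab]

lemma tPlus_injective {μ : ℕ → ℕ} {e : ℕ} (hpos : 0 < μ e) :
    Function.Injective (tPlus μ e hpos) := by
  intro c c' h
  have := congrFun h (cornerBox μ e hpos)
  simpa [tPlus] using this

lemma le_mu_iff {μ : ℕ → ℕ} (hμ : ∀ i, μ (i + 1) ≤ μ i) {e : ℕ}
    (hefirst : ∀ i, i ≤ e → μ i = μ 0) (hedrop : μ (e + 1) < μ e) (i : ℕ) :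
    μ e ≤ μ i ↔ i ≤ e := by
  constructor
  · intro h
    by_contra hc
    have := antitone_nat_of_succ_le hμ (show e + 1 ≤ i by omega)
    omega
  · exact fun h => (hefirst e le_rfl).trans (hefirst i h).symm |>.le

lemma css_tPlus {μ : ℕ → ℕ} (hμ : ∀ i, μ (i + 1) ≤ μ i) {e : ℕ}
    (hefirst : ∀ i, i ≤ e → μ i = μ 0) (hedrop : μ (e + 1) < μ e) (hpos : 0 < μ e) (c : ℕ) :
    ConjSemistandard μ (tPlus μ e hpos c) := by
  refine ⟨?_, ?_, ?_⟩
  · rintro ⟨⟨i, j⟩, h⟩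
    have := ent_tPlus hpos c (i := i) h
    rw [ent_of_lt _ h] at this
    rw [this]
    split_ifs <;> omega
  · intro i j j' h h' hlt
    rw [← ent_of_lt (tPlus μ e hpos c) h, ← ent_of_lt (tPlus μ e hpos c) h', ent_tPlus hpos c h, ent_tPlus hpos c h']
    by_cases hi : i = e
    · subst hi
      split_ifs <;> omega
    · simp [hi, hlt]
  · intro i i' j h h' hlt
    rw [← ent_of_lt (tPlus μ e hpos c) h, ← ent_of_lt (tPlus μ e hpos c) h', ent_tPlus hpos c h, ent_tPlus hpos c h']
    have := le_mu_iff hμ hefirst hedrop i'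
    split_ifs <;> omega

lemma agree_tPlus {μ : ℕ → ℕ} {e : ℕ} (hpos : 0 < μ e) (c : ℕ) :
    Agree μ (tPlus μ e hpos c) (μ e - 1) := by
  intro i j hj h
  rw [ent_tPlus hpos c h, if_neg (by omega)]

lemma entryCount_tPlus_lt {μ : ℕ → ℕ} (hμ : ∀ i, μ (i + 1) ≤ μ i) {e : ℕ} (k : ℕ)
    (hefirst : ∀ i, i ≤ e → μ i = μ 0) (hedrop : μ (e + 1) < μ e) (hpos : 0 < μ e) (c : ℕ)
    {j : ℕ} (hj : j + 1 < μ e) :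
    entryCount μ k (tPlus μ e hpos c) (j + 1) =
      ((Finset.range k).filter fun i => j + 1 ≤ μ i).card := by
  rw [entryCount_succ k (css_tPlus hμ hefirst hedrop hpos c)
    (fun i j' h h' => agree_tPlus hpos c i j' (by omega) h')]
  congr 1
  refine Finset.filter_congr fun i _ => ?_
  refine ⟨fun h => h.1, fun h => ⟨h, ?_⟩⟩
  rw [ent_tPlus hpos c h, if_neg (by omega)]

lemma entryCount_tPlus_corner {μ : ℕ → ℕ} (hμ : ∀ i, μ (i + 1) ≤ μ i) {e k : ℕ} (he : e < k)
    (hefirst : ∀ i, i ≤ e → μ i = μ 0) (hedrop : μ (e + 1) < μ e) (hpos : 0 < μ e) (c : ℕ) :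
    entryCount μ k (tPlus μ e hpos c) (μ e) = if c = 0 then e + 1 else e := by
  have h1 := entryCount_succ k (css_tPlus hμ hefirst hedrop hpos c) (agree_tPlus hpos c)
  rw [Nat.sub_add_cancel hpos] at h1
  rw [h1]
  have h2 : ∀ b : ℕ, (b = if c = 0 then e + 1 else e) →
      ((Finset.range k).filter fun i =>
        μ e - 1 < μ i ∧ ent μ (tPlus μ e hpos c) i (μ e - 1) = μ e) = Finset.range b := by
    intro b hb
    ext i
    simp only [Finset.mem_filter, Finset.mem_range]
    have h3 := le_mu_iff hμ hefirst hedrop i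
    constructor
    · rintro ⟨_, h, h'⟩
      rw [ent_tPlus hpos c h] at h'
      split_ifs at h' hb <;> omega
    · intro h
      have h4 : μ e - 1 < μ i := by
        have : i ≤ e := by split_ifs at hb <;> omega
        have := h3.mpr this
        omega
      refine ⟨by split_ifs at hb <;> omega, h4, ?_⟩
      rw [ent_tPlus hpos c h4]
      split_ifs at hb ⊢ <;> omega
  rw [h2 _ rfl, Finset.card_range]

lemma entryCount_tPlus_gt {μ : ℕ → ℕ} (hμ : ∀ i, μ (i + 1) ≤ μ i) {e k : ℕ} (he : e < k)
    (hefirst : ∀ i, i ≤ e → μ i = μ 0) (hpos : 0 < μ e) (c a : ℕ)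
    (ha : 1 ≤ a) :
    entryCount μ k (tPlus μ e hpos c) (μ e + a) = if c = a then 1 else 0 := by
  have hle : ∀ i, μ i ≤ μ e := fun i =>
    (antitone_nat_of_succ_le hμ (Nat.zero_le i)).trans (hefirst e le_rfl).ge
  rw [entryCount_eq_s10]
  have h1 : ∀ i ∈ Finset.range k,
      ((Finset.range (μ i)).filter fun j => ent μ (tPlus μ e hpos c) i j = μ e + a).card =
        if i = e then (if c = a then 1 else 0) else 0 := by
    intro i _
    have hcond : ∀ j, j < μ i →
        (ent μ (tPlus μ e hpos c) i j = μ e + a ↔ i = e ∧ j = μ e - 1 ∧ c = a) := by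
      intro j hj
      have := hle i
      rw [ent_tPlus hpos c hj]
      split_ifs <;> omega
    by_cases h : i = e ∧ c = a
    · rw [if_pos h.1, if_pos h.2, Finset.card_eq_one]
      refine ⟨μ e - 1, ?_⟩
      ext j
      simp only [Finset.mem_filter, Finset.mem_range, Finset.mem_singleton]
      constructor
      · exact fun hj => ((hcond j hj.1).mp hj.2).2.1
      · rintro rfl
        have h5 : μ e - 1 < μ i := by rw [h.1]; omega
        exact ⟨h5, (hcond _ h5).mpr ⟨h.1, rfl, h.2⟩⟩
    · have : (if i = e then (if c = a then 1 else 0) else 0) = 0 := by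
        split_ifs <;> tauto
      rw [this, Finset.card_eq_zero, Finset.filter_eq_empty_iff]
      intro j hj hj'
      have := (hcond j (Finset.mem_range.mp hj)).mp hj'
      exact h ⟨this.1, this.2.2⟩
  rw [Finset.sum_congr rfl h1, Finset.sum_ite_eq' (Finset.range k) e,
    if_pos (Finset.mem_range.mpr he)]

lemma entryCount_zero {μ : ℕ → ℕ} {t : Box μ → ℕ} (k : ℕ) (ht : ConjSemistandard μ t) :
    entryCount μ k t 0 = 0 := by
  rw [entryCount_eq_s10]
  refine Finset.sum_eq_zero fun i _ => ?_
  rw [Finset.card_eq_zero, Finset.filter_eq_empty_iff]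
  intro j hj h
  have := ent_lower ht i j (Finset.mem_range.mp hj)
  omega

/-- A tableau with only its last column free and at least `e` entries `μ_e` is some `t^{+c}`,
because the last column weakly increases. -/
lemma eq_tPlus {μ : ℕ → ℕ} (hμ : ∀ i, μ (i + 1) ≤ μ i) {e k : ℕ}
    (hefirst : ∀ i, i ≤ e → μ i = μ 0) (hedrop : μ (e + 1) < μ e) (hpos : 0 < μ e)
    {s : Box μ → ℕ} (hs : ConjSemistandard μ s) (hag : Agree μ s (μ e - 1))
    (hc : e ≤ entryCount μ k s (μ e)) : ∃ c, s = tPlus μ e hpos c := by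
  have hle : ∀ i, μ i ≤ μ e := fun i =>
    (antitone_nat_of_succ_le hμ (Nat.zero_le i)).trans (hefirst e le_rfl).ge
  have h1 := entryCount_succ k hs hag
  rw [Nat.sub_add_cancel hpos] at h1
  rw [h1] at hc
  have hcol : ∀ i, i < e → ent μ s i (μ e - 1) = μ e := by
    intro i hi
    have hi' := (le_mu_iff hμ hefirst hedrop i).mpr hi.le
    by_contra hne
    have hlow := ent_lower hs i (μ e - 1) (by omega)
    -- an entry exceeding `μ e` in row `i` excludes `μ e` from all rows below
    have hsub : ((Finset.range k).filter fun a =>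
        μ e - 1 < μ a ∧ ent μ s a (μ e - 1) = μ e) ⊆ Finset.range i := by
      intro a
      simp only [Finset.mem_filter, Finset.mem_range]
      rintro ⟨_, ha, ha'⟩
      by_contra hia
      rcases Nat.eq_or_lt_of_le (not_lt.mp hia) with rfl | hlt
      · exact hne ha'
      · have := hs.2.2 i a (μ e - 1) (by omega) ha hlt
        rw [← ent_of_lt s, ← ent_of_lt s] at this
        omega
    have := Finset.card_le_card hsub
    rw [Finset.card_range] at this
    omega
  refine ⟨ent μ s e (μ e - 1) - μ e, ?_⟩
  funext ⟨⟨i, j⟩, h⟩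
  have hh : j < μ i := h
  have hlow := ent_lower hs i j h
  rw [← ent_of_lt s h, ← ent_of_lt (tPlus μ e hpos _) h, ent_tPlus hpos _ h]
  have h2 := hle i
  split_ifs with hij
  · obtain ⟨hi, hj⟩ : i = e ∧ j = μ e - 1 := hij
    rw [hi, hj] at hlow
    change ent μ s i j = _
    rw [hi, hj]
    omega
  · by_cases hj : j < μ e - 1
    · exact hag i j hj h
    · have hj' : j = μ e - 1 := by omega
      have := (le_mu_iff hμ hefirst hedrop i).mp (by omega)
      rw [hj', hcol i (by omega)]
      omega

/-! ### Weights of families -/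

lemma gammaMax_lt {μ : ℕ → ℕ} (k : ℕ) {e n j : ℕ} (hj : j + 1 < μ e) :
    gammaMax μ k e n (j + 1) = n * ((Finset.range k).filter fun i => j + 1 ≤ μ i).card := by
  simp [gammaMax, hj]

lemma gammaMax_corner {μ : ℕ → ℕ} (k : ℕ) {e n : ℕ} (hpos : 0 < μ e) (hn : 1 ≤ n) :
    gammaMax μ k e n (μ e) = n * e + 1 := by
  simp only [gammaMax, hpos.ne', if_false, lt_irrefl, if_true, mul_add, mul_one]
  omega

lemma gammaMax_gt {μ : ℕ → ℕ} (k : ℕ) {e n a : ℕ} (ha : 1 ≤ a) :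
    gammaMax μ k e n (μ e + a) = if a < n then 1 else 0 := by
  unfold gammaMax
  rw [if_neg (by omega), if_neg (by omega), if_neg (by omega)]
  split_ifs <;> omega

open scoped Classical in
lemma familyWeight_image_gt {μ : ℕ → ℕ} (hμ : ∀ i, μ (i + 1) ≤ μ i) {e k : ℕ} (he : e < k)
    (hefirst : ∀ i, i ≤ e → μ i = μ 0) (hpos : 0 < μ e) (C : Finset ℕ)
    (a : ℕ) (ha : 1 ≤ a) :
    familyWeight μ k (C.image (tPlus μ e hpos)) (μ e + a) = if a ∈ C then 1 else 0 := by
  unfold familyWeight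
  rw [Finset.sum_image (fun _ _ _ _ h => tPlus_injective hpos h),
    Finset.sum_congr rfl fun c _ => entryCount_tPlus_gt hμ he hefirst hpos c a ha,
    Finset.sum_ite_eq']

open scoped Classical in
lemma familyWeight_range {μ : ℕ → ℕ} (hμ : ∀ i, μ (i + 1) ≤ μ i) {e k n : ℕ} (he : e < k)
    (hn : 1 ≤ n) (hefirst : ∀ i, i ≤ e → μ i = μ 0) (hedrop : μ (e + 1) < μ e) (hpos : 0 < μ e)
    (j : ℕ) :
    familyWeight μ k ((Finset.range n).image (tPlus μ e hpos)) j = gammaMax μ k e n j := by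
  rcases lt_trichotomy j (μ e) with h | rfl | h
  · unfold familyWeight
    rw [Finset.sum_image (fun _ _ _ _ h => tPlus_injective hpos h)]
    cases j with
    | zero =>
      rw [Finset.sum_eq_zero fun c _ =>
        entryCount_zero k (css_tPlus hμ hefirst hedrop hpos c)]
      simp [gammaMax]
    | succ j =>
      rw [gammaMax_lt k h,
        Finset.sum_congr rfl fun c _ => entryCount_tPlus_lt hμ k hefirst hedrop hpos c h]
      simp
  · unfold familyWeight
    rw [Finset.sum_image (fun _ _ _ _ h => tPlus_injective hpos h), gammaMax_corner k hpos hn,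
      Finset.sum_congr rfl fun c _ => entryCount_tPlus_corner hμ he hefirst hedrop hpos c]
    obtain ⟨n, rfl⟩ : ∃ b, n = b + 1 := ⟨n - 1, by omega⟩
    rw [Finset.sum_range_succ']
    simp
    ring
  · obtain ⟨a, rfl⟩ : ∃ a, j = μ e + a := ⟨j - μ e, by omega⟩
    rw [familyWeight_image_gt hμ he hefirst hpos _ a (by omega), gammaMax_gt k (by omega)]
    simp

open scoped Classical in
/-- A family whose weight is not lexicographically smaller than `γ` is the distinguished one. -/
lemma eq_of_not_lexLT {μ : ℕ → ℕ} (hμ : ∀ i, μ (i + 1) ≤ μ i) {e k n : ℕ} (he : e < k)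
    (hk : ∀ i, k ≤ i → μ i = 0) (hn : 1 ≤ n) (hefirst : ∀ i, i ≤ e → μ i = μ 0)
    (hedrop : μ (e + 1) < μ e) (hpos : 0 < μ e)
    (S : Finset (Box μ → ℕ)) (hcard : S.card = n) (hS : ∀ s ∈ S, ConjSemistandard μ s)
    (hlex : ¬ LexLT (familyWeight μ k S) (gammaMax μ k e n)) :
    S = (Finset.range n).image (tPlus μ e hpos) := by
  -- wherever the weights agree so far, the next multiplicity is at least that of `γ`
  have next : ∀ j, (∀ j', 1 ≤ j' → j' ≤ j → familyWeight μ k S j' = gammaMax μ k e n j') →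
      gammaMax μ k e n (j + 1) ≤ familyWeight μ k S (j + 1) := by
    intro j h
    by_contra hc
    exact hlex ⟨j + 1, by omega, fun j' h1 h2 => h j' h1 (by omega), not_le.mp hc⟩
  have step1 : ∀ j, j ≤ μ e - 1 → (∀ s ∈ S, Agree μ s j) ∧
      ∀ j', 1 ≤ j' → j' ≤ j → familyWeight μ k S j' = gammaMax μ k e n j' := by
    intro j
    induction j with
    | zero => exact fun _ => ⟨fun s _ i j' h => absurd h (by omega), fun j' _ _ => by omega⟩
    | succ j ih =>
      intro hj
      obtain ⟨hA, hW⟩ := ih (by omega)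
      have h1 := next j hW
      rw [gammaMax_lt k (by omega), ← hcard, ← smul_eq_mul, ← Finset.sum_const] at h1
      have hle : ∀ s ∈ S, entryCount μ k s (j + 1) ≤
          ((Finset.range k).filter fun i => j + 1 ≤ μ i).card :=
        fun s hs => entryCount_le k (hS s hs) (hA s hs)
      have hsum := le_antisymm (Finset.sum_le_sum hle) h1
      have heq := (Finset.sum_eq_sum_iff_of_le hle).mp hsum
      refine ⟨fun s hs => agree_succ hk (hS s hs) (hA s hs) (heq s hs), fun j' h2 h3 => ?_⟩
      rcases Nat.eq_or_lt_of_le h3 with rfl | h3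
      · rw [gammaMax_lt k (by omega), ← hcard, ← smul_eq_mul, ← Finset.sum_const]
        exact hsum
      · exact hW j' h2 (by omega)
  obtain ⟨hA, hW⟩ := step1 _ le_rfl
  have h1 := next _ hW
  rw [Nat.sub_add_cancel hpos, gammaMax_corner k hpos hn] at h1
  have hcorner := entryCount_tPlus_corner hμ he hefirst hedrop hpos
  have hsmall : ∀ s ∈ S, s ≠ tPlus μ e hpos 0 → entryCount μ k s (μ e) ≤ e := by
    intro s hs hne
    by_contra hc
    obtain ⟨c, rfl⟩ := eq_tPlus hμ hefirst hedrop hpos (hS s hs) (hA s hs) (not_le.mp hc).le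
    have hc0 : c ≠ 0 := fun h => hne (h ▸ rfl)
    rw [hcorner c, if_neg hc0] at hc
    exact hc le_rfl
  have hmem : tPlus μ e hpos 0 ∈ S := by
    by_contra hc
    have : familyWeight μ k S (μ e) ≤ S.card • e :=
      Finset.sum_le_card_nsmul _ _ _ fun s hs => hsmall s hs fun h => hc (h ▸ hs)
    rw [hcard, smul_eq_mul] at this
    omega
  have hsplit : familyWeight μ k S (μ e) =
      (e + 1) + ∑ s ∈ S.erase (tPlus μ e hpos 0), entryCount μ k s (μ e) := by
    unfold familyWeight
    rw [← Finset.add_sum_erase S _ hmem, hcorner 0, if_pos rfl]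
  have hle : ∀ s ∈ S.erase (tPlus μ e hpos 0), entryCount μ k s (μ e) ≤ e :=
    fun s hs => hsmall s (Finset.mem_of_mem_erase hs) (Finset.ne_of_mem_erase hs)
  have hconst : ∑ s ∈ S.erase (tPlus μ e hpos 0), e + e = n * e := by
    rw [Finset.sum_const, Finset.card_erase_of_mem hmem, hcard, smul_eq_mul]
    obtain ⟨b, rfl⟩ : ∃ b, n = b + 1 := ⟨n - 1, by omega⟩
    simp
    ring
  have hsum : ∑ s ∈ S.erase (tPlus μ e hpos 0), entryCount μ k s (μ e) =
      ∑ s ∈ S.erase (tPlus μ e hpos 0), e :=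
    le_antisymm (Finset.sum_le_sum hle) (by omega)
  have heq := (Finset.sum_eq_sum_iff_of_le hle).mp hsum
  have hWc : familyWeight μ k S (μ e) = gammaMax μ k e n (μ e) := by
    rw [gammaMax_corner k hpos hn]
    omega
  have hform : ∀ s ∈ S, ∃ c, s = tPlus μ e hpos c := by
    intro s hs
    by_cases h : s = tPlus μ e hpos 0
    · exact ⟨0, h⟩
    · exact eq_tPlus hμ hefirst hedrop hpos (hS s hs) (hA s hs)
        (heq s (Finset.mem_erase.mpr ⟨h, hs⟩)).ge
  obtain ⟨C, rfl⟩ : ∃ C : Finset ℕ, S = C.image (tPlus μ e hpos) := by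
    refine ⟨S.preimage _ (tPlus_injective hpos).injOn, ?_⟩
    rw [Finset.image_preimage, Finset.filter_true_of_mem]
    intro s hs
    obtain ⟨c, rfl⟩ := hform s hs
    exact ⟨c, rfl⟩
  rw [Finset.card_image_of_injective _ (tPlus_injective hpos)] at hcard
  have hC : ∀ c, c < n → c ∈ C := by
    intro c
    induction c using Nat.strong_induction_on with
    | _ c ih =>
      intro hc
      rcases Nat.eq_zero_or_pos c with rfl | hc0
      · obtain ⟨c', hc', h⟩ := Finset.mem_image.mp hmem
        rwa [← tPlus_injective hpos h]
      · by_contra hnot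
        refine hlex ⟨μ e + c, by omega, fun j' h2 h3 => ?_, ?_⟩
        · rcases lt_trichotomy j' (μ e) with h | rfl | h
          · exact hW j' h2 (by omega)
          · exact hWc
          · obtain ⟨a, rfl⟩ : ∃ a, j' = μ e + a := ⟨j' - μ e, by omega⟩
            rw [familyWeight_image_gt hμ he hefirst hpos _ a (by omega),
              gammaMax_gt k (by omega), if_pos (ih a (by omega) (by omega)),
              if_pos (by omega)]
        · rw [familyWeight_image_gt hμ he hefirst hpos _ c hc0, gammaMax_gt k hc0,
            if_neg hnot, if_pos hc]
          exact Nat.one_pos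
  rw [Finset.eq_of_subset_of_card_le (fun c hc => hC c (Finset.mem_range.mp hc))
    (by rw [Finset.card_range, hcard] : C.card ≤ (Finset.range n).card)]

open scoped Classical in
/-- **Proposition 8.7 (Paget–Wildon), proof step.** Let `μ` be a partition of `m ≥ 1` with exactly
`k` parts and let `n ≥ 1`.  Let `e` be the least (0-indexed) row with a removable box, so that
`μ_0 = … = μ_e > μ_{e+1}`.  Then `{t, t^{+1}, …, t^{+(n−1)}}` is a conjugate-semistandard
tableau family of shape `μ^n` with weight `γ = gammaMax`; it is the unique such family with
weight `γ`; and every other conjugate-semistandard tableau family of shape `μ^n` has weight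
strictly smaller than `γ` in the lexicographic order. -/
theorem lex_greatest_family
    (μ : ℕ → ℕ) (hμ : ∀ i, μ (i + 1) ≤ μ i)
    (m k : ℕ) (hm1 : 1 ≤ m) (hmsum : m = ∑ i ∈ Finset.range k, μ i)
    (hkpos : ∀ i, i < k → 0 < μ i) (hk : ∀ i, k ≤ i → μ i = 0)
    (n : ℕ) (hn1 : 1 ≤ n)
    (e : ℕ) (he : e < k) (hefirst : ∀ i, i ≤ e → μ i = μ 0) (hedrop : μ (e + 1) < μ e)
    (hpos : 0 < μ e) :
    ((Finset.range n).image (tPlus μ e hpos)).card = n ∧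
    (∀ c, c < n → ConjSemistandard μ (tPlus μ e hpos c)) ∧
    (∀ j, familyWeight μ k ((Finset.range n).image (tPlus μ e hpos)) j = gammaMax μ k e n j) ∧
    (∀ S : Finset (Box μ → ℕ), S.card = n → (∀ s ∈ S, ConjSemistandard μ s) →
      (∀ j, familyWeight μ k S j = gammaMax μ k e n j) →
      S = (Finset.range n).image (tPlus μ e hpos)) ∧
    (∀ S : Finset (Box μ → ℕ), S.card = n → (∀ s ∈ S, ConjSemistandard μ s) →
      S ≠ (Finset.range n).image (tPlus μ e hpos) →
      LexLT (familyWeight μ k S) (gammaMax μ k e n)) := by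
  refine ⟨?_, fun c _ => css_tPlus hμ hefirst hedrop hpos c,
    familyWeight_range hμ he hn1 hefirst hedrop hpos, ?_, ?_⟩
  · rw [Finset.card_image_of_injective _ (tPlus_injective hpos), Finset.card_range]
  · intro S hcard hS hw
    refine eq_of_not_lexLT hμ he hk hn1 hefirst hedrop hpos S hcard hS ?_
    rintro ⟨j, _, _, hj⟩
    exact absurd (hw j) hj.ne
  · intro S hcard hS hne
    by_contra hlex
    exact hne (eq_of_not_lexLT hμ he hk hn1 hefirst hedrop hpos S hcard hS hlex)
end
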